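/- arXiv:2205.04938 — 2 statements merged into one kernel-verified Lean document; each statement's English description precedes it below -/
import Mathlib

section
/- Let a, b, k be positive integers with k ≥ a, let x be a row index in {1,...,a}, and d ∈ ℤ. For T ∈ SSYT_k(a × b), define #B(T,x,d) as the number of boxes in row x of T with entry greater than d. Then the statistic T ↦ #B(T,x,d) + #B(T,a+1−x,k−d) is b-mesic under promotion: the average of this statistic over every promotion orbit equals b. -/
open scoped Classical

/-- `T ∈ SSYT_k(a × b)`: a filling of the `a × b` rectangle (rows indexed by `Fin a`,
columns by `Fin b`) with entries in `{1,…,k}`, weakly increasing along rows and strictly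
increasing down columns. -/
def IsSSYT (a b k : ℕ) (T : Fin a → Fin b → ℤ) : Prop :=
  (∀ x y, 1 ≤ T x y ∧ T x y ≤ (k : ℤ)) ∧
  (∀ (x : Fin a) (y y' : Fin b), y ≤ y' → T x y ≤ T x y') ∧
  (∀ (y : Fin b) (x x' : Fin a), x < x' → T x y < T x' y)

/-- The Bender–Knuth involution `ρ_j` on rectangular fillings.  An entry `j` in box
`(x,y)` is free if the box below does not contain `j+1`; an entry `j+1` is free if the
box above does not contain `j`.  In each row, the `a` free `j`'s followed by `b` free
`(j+1)`'s are replaced by `b` free `j`'s followed by `a` free `(j+1)`'s: a free box gets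
the value `j` precisely when its rank among the free boxes of its row is at most the
number of free `(j+1)`'s. -/
noncomputable def bk (a b : ℕ) (j : ℤ) (T : Fin a → Fin b → ℤ) : Fin a → Fin b → ℤ :=
  fun x y =>
    let low : Fin b → Prop := fun y' =>
      T x y' = j ∧ ∀ h : (x : ℕ) + 1 < a, T ⟨(x : ℕ) + 1, h⟩ y' ≠ j + 1
    let high : Fin b → Prop := fun y' =>
      T x y' = j + 1 ∧ ∀ x' : Fin a, (x' : ℕ) + 1 = (x : ℕ) → T x' y' ≠ j
    if low y ∨ high y then
      if (Finset.univ.filter (fun y' : Fin b => (low y' ∨ high y') ∧ y' ≤ y)).card ≤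
          (Finset.univ.filter (fun y' : Fin b => high y')).card
      then j else j + 1
    else T x y

/-- Promotion `Pro = ρ_{k−1} ∘ ⋯ ∘ ρ_2 ∘ ρ_1` on fillings of the `a × b` rectangle with
entries at most `k` (so `ρ_1` is applied first). -/
noncomputable def pro (a b k : ℕ) (T : Fin a → Fin b → ℤ) : Fin a → Fin b → ℤ :=
  (List.range (k - 1)).foldl (fun S i => bk a b ((i : ℤ) + 1) S) T

/-- `#B(T,x,d)`: the number of boxes in row `x` of `T` whose entry exceeds `d`. -/
noncomputable def bcount (a b : ℕ) (T : Fin a → Fin b → ℤ) (x : Fin a) (d : ℤ) : ℕ :=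
  (Finset.univ.filter (fun y : Fin b => d < T x y)).card

/-!
A semistandard tableau is encoded by its Gelfand–Tsetlin pattern, on which Bender–Knuth involutions
act by piecewise-linear toggles. Summing the pattern from the bottom row up turns the toggle rule
into a tropical octahedron recurrence. Over Laurent series, the same recurrence without
tropicalization is a three-term Plücker relation between maximal minors on two windows of a sequence
of vectors, and all signs are positive, so that leading exponents see no cancellation. The sequence
can be chosen with any prescribed initial minors and continued quasi-periodically with period `k`.
Exchanging the two windows of a minor by means of the quasi-period yields the reciprocity
`#B(T, x, d) + #B(Pro^d T, a + 1 - x, k - d) = b`, and summing it over an orbit, where shifting by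
`Pro^d` changes nothing, gives the theorem.
-/

section RowDeterminants

variable {R : Type*} [CommRing R]

section

variable {n : Type*} [Fintype n] [DecidableEq n]

theorem det_smul_eq_sum_det_updateRow_smul (M : Matrix n n R) (u : n → R) :
    M.det • u = ∑ l, (M.updateRow l u).det • M.row l := by
  rw [← Matrix.det_transpose M, ← Matrix.mulVec_cramer]
  ext m
  simp [Matrix.mulVec, dotProduct, Matrix.cramer_transpose_apply, mul_comm]

/-- The determinant of `M` as a linear function of its `i`-th row. -/
def detUpdateRow (M : Matrix n n R) (i : n) :
    (n → R) →ₗ[R] R where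
  toFun x := (M.updateRow i x).det
  map_add' := M.det_updateRow_add i
  map_smul' := M.det_updateRow_smul i

theorem det_updateRow_updateRow_swap (M : Matrix n n R) {i j : n} (hij : i ≠ j) (p q : n → R) :
    ((M.updateRow i p).updateRow j q).det = -((M.updateRow i q).updateRow j p).det := by
  have swapped := Matrix.det_permute (Equiv.swap i j) ((M.updateRow i q).updateRow j p)
  rw [Equiv.Perm.sign_swap hij, Units.val_neg, Units.val_one, Int.cast_neg, Int.cast_one,
    neg_one_mul] at swapped
  rw [← swapped]
  congr 1
  ext l m
  rcases eq_or_ne l i with rfl | hli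
  · simp [Matrix.updateRow_apply, hij]
  rcases eq_or_ne l j with rfl | hlj
  · simp [Matrix.updateRow_apply, hij]
  · simp [Matrix.updateRow_apply, Equiv.swap_apply_of_ne_of_ne hli hlj, hli, hlj]

theorem det_updateRow_updateRow_plucker (M : Matrix n n R) {i j : n} (hij : i ≠ j)
    (p q u w : n → R) :
    ((M.updateRow i p).updateRow j u).det * ((M.updateRow i q).updateRow j w).det =
      ((M.updateRow i p).updateRow j w).det * ((M.updateRow i q).updateRow j u).det +
        ((M.updateRow i p).updateRow j q).det * ((M.updateRow i u).updateRow j w).det := by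
  set N := (M.updateRow i p).updateRow j q with hN
  let φ := detUpdateRow (M.updateRow j w) i
  have hφ (x : n → R) : φ x = ((M.updateRow i x).updateRow j w).det :=
    congrArg Matrix.det (Matrix.updateRow_comm M hij.symm w x)
  have row_i : N.row i = p := by ext; simp [hN, hij]
  have row_j : N.row j = q := by ext; simp [hN]
  have hNi : (N.updateRow i u).det = -((M.updateRow i q).updateRow j u).det := by
    rw [← det_updateRow_updateRow_swap M hij u q]
    congr 1
    ext l m
    simp only [hN, Matrix.updateRow_apply]
    grind
  have hNj : (N.updateRow j u).det = ((M.updateRow i p).updateRow j u).det := by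
    rw [hN, Matrix.updateRow_idem]
  have hrest : ∀ l, l ≠ i ∧ l ≠ j → (N.updateRow l u).det * φ (N.row l) = 0 := by
    rintro l ⟨hli, hlj⟩
    rw [hφ, Matrix.det_zero_of_row_eq hli (M := (M.updateRow i _).updateRow j w), mul_zero]
    ext m
    simp [hN, Matrix.updateRow_apply, hli, hlj, hij]
  have expansion := congrArg φ (det_smul_eq_sum_det_updateRow_smul N u)
  simp only [map_smul, map_sum, smul_eq_mul] at expansion
  rw [Fintype.sum_eq_add i j hij hrest, row_i, row_j, hNi, hNj, hφ, hφ, hφ] at expansion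
  linear_combination -expansion

end

variable {a : ℕ}

/-- The determinant of the `a × a` matrix whose rows are listed in `l`. It is meant for lists of
length `a`: missing rows are `0` and rows beyond the `a`-th are ignored. -/
def rowDet (l : List (Fin a → R)) : R :=
  Matrix.det (Matrix.of fun i : Fin a => l.getD i 0)

/-- `rowDet` as a linear function of the row standing between `l₁` and `l₂`. -/
def rowDetAt (l₁ l₂ : List (Fin a → R)) (h : l₁.length < a) : (Fin a → R) →ₗ[R] R :=
  detUpdateRow (Matrix.of fun i : Fin a => (l₁ ++ 0 :: l₂).getD i 0) ⟨l₁.length, h⟩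

theorem of_getD_append_cons (l₁ l₂ : List (Fin a → R)) (x z : Fin a → R) (h : l₁.length < a) :
    (Matrix.of fun i : Fin a => (l₁ ++ x :: l₂).getD i 0) =
      (Matrix.of fun i : Fin a => (l₁ ++ z :: l₂).getD i 0).updateRow ⟨l₁.length, h⟩ x := by
  ext i m
  rw [Matrix.updateRow_apply]
  split_ifs with hi
  · simp [hi]
  · have : (i : ℕ) ≠ l₁.length := fun h' => hi (Fin.ext h')
    simp only [Matrix.of_apply, List.getD_eq_getElem?_getD, List.getElem?_append,
      List.getElem?_cons]
    grind

theorem rowDetAt_apply (l₁ l₂ : List (Fin a → R)) (h : l₁.length < a) (x : Fin a → R) :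
    rowDetAt l₁ l₂ h x = rowDet (l₁ ++ x :: l₂) :=
  (congrArg Matrix.det (of_getD_append_cons l₁ l₂ x 0 h)).symm

theorem rowDet_append_cons_append_cons (l₁ l₂ l₃ : List (Fin a → R)) (x y : Fin a → R)
    (h : l₁.length + l₂.length + 1 < a) :
    rowDet (l₁ ++ x :: (l₂ ++ y :: l₃)) =
      (((Matrix.of fun i : Fin a => (l₁ ++ 0 :: (l₂ ++ 0 :: l₃)).getD i 0).updateRow
        ⟨l₁.length, by omega⟩ x).updateRow ⟨l₁.length + l₂.length + 1, h⟩ y).det := by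
  have hlen : (l₁ ++ x :: l₂).length = l₁.length + l₂.length + 1 := by simp; omega
  rw [← of_getD_append_cons, rowDet, ← List.cons_append, ← List.append_assoc,
    of_getD_append_cons _ _ y 0 (by omega)]
  simp [hlen]

theorem rowDet_swap (l₁ l₂ : List (Fin a → R)) (x y : Fin a → R) (h : l₁.length + 1 < a) :
    rowDet (l₁ ++ x :: y :: l₂) = -rowDet (l₁ ++ y :: x :: l₂) := by
  have expand := fun x y : Fin a → R => rowDet_append_cons_append_cons l₁ [] l₂ x y (by simpa)
  simp only [List.nil_append] at expand
  rw [expand, expand, det_updateRow_updateRow_swap _ (by simp [Fin.ext_iff])]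

theorem rowDet_eq_zero_of_mem {l : List (Fin a → R)} {x : Fin a → R} (hx : x ∈ l)
    (h : l.length < a) (l' : List (Fin a → R)) : rowDet (l ++ x :: l') = 0 := by
  obtain ⟨i, hi, rfl⟩ := List.getElem_of_mem hx
  refine Matrix.det_zero_of_row_eq (i := ⟨i, by omega⟩) (j := ⟨l.length, h⟩)
    (by simp [Fin.ext_iff]; omega) ?_
  ext m
  simp [List.getElem?_append, hi]

theorem rowDet_cons_append (l₁ l₂ l₃ : List (Fin a → R)) (x : Fin a → R)
    (h : l₁.length + l₂.length < a) :
    rowDet (l₁ ++ x :: (l₂ ++ l₃)) = (-1) ^ l₂.length * rowDet (l₁ ++ (l₂ ++ x :: l₃)) := by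
  induction l₂ generalizing l₁ with
  | nil => simp
  | cons y l₂ ih =>
    simp only [List.length_cons] at h
    have moved := ih (l₁ ++ [y]) (by simp; omega)
    simp only [List.append_assoc, List.cons_append, List.nil_append] at moved
    rw [List.cons_append, rowDet_swap _ _ _ _ (by omega), moved, List.length_cons, pow_succ]
    simp

theorem rowDet_plucker (l₁ l₂ : List (Fin a → R)) (h : l₁.length + 1 < a) (p q u w : Fin a → R) :
    rowDet (p :: (l₁ ++ u :: l₂)) * rowDet (q :: (l₁ ++ w :: l₂)) =
      rowDet (p :: (l₁ ++ w :: l₂)) * rowDet (q :: (l₁ ++ u :: l₂)) +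
        rowDet (p :: (l₁ ++ q :: l₂)) * rowDet (u :: (l₁ ++ w :: l₂)) := by
  have expand := fun x y : Fin a → R => rowDet_append_cons_append_cons [] l₁ l₂ x y (by simpa)
  simp only [List.nil_append] at expand
  simp only [expand]
  exact det_updateRow_updateRow_plucker _ (by simp [Fin.ext_iff]) p q u w

theorem rowDet_octahedron (l₁ l₂ : List (Fin a → R)) (h : l₁.length + l₂.length + 2 = a)
    (p q u w : Fin a → R) :
    rowDet (p :: l₁ ++ u :: l₂) * rowDet (l₁ ++ q :: (l₂ ++ [w])) =
      rowDet (p :: l₁ ++ (l₂ ++ [w])) * rowDet (l₁ ++ q :: u :: l₂) +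
        rowDet (p :: l₁ ++ q :: l₂) * rowDet (l₁ ++ u :: (l₂ ++ [w])) := by
  have move_past_l₁ (x : Fin a → R) (l : List (Fin a → R)) :
      rowDet (x :: (l₁ ++ l)) = (-1) ^ l₁.length * rowDet (l₁ ++ x :: l) :=
    rowDet_cons_append [] l₁ l x (by simp; omega)
  have move_past_l₂ (l : List (Fin a → R)) (hl : l.length = l₁.length + 1) :
      rowDet (l ++ w :: l₂) = (-1) ^ l₂.length * rowDet (l ++ (l₂ ++ [w])) := by
    simpa using rowDet_cons_append l l₂ [] w (by omega)
  have move_both (x : Fin a → R) : rowDet (x :: (l₁ ++ w :: l₂)) =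
      (-1) ^ l₁.length * ((-1) ^ l₂.length * rowDet (l₁ ++ x :: (l₂ ++ [w]))) := by
    rw [move_past_l₁, List.append_cons, move_past_l₂ _ (by simp), ← List.append_cons]
  have move_right : rowDet (p :: (l₁ ++ w :: l₂)) =
      (-1) ^ l₂.length * rowDet (p :: (l₁ ++ (l₂ ++ [w]))) := move_past_l₂ (p :: l₁) (by simp)
  have plucker := rowDet_plucker l₁ l₂ (by omega) p q u w
  rw [move_both q, move_both u, move_right, move_past_l₁ q] at plucker
  simp only [List.cons_append]
  have hsign : (((-1 : R) ^ l₁.length) * (-1) ^ l₂.length) ^ 2 = 1 := by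
    rw [← pow_add, ← pow_mul, mul_comm, pow_mul]; simp
  linear_combination ((-1) ^ l₁.length * (-1) ^ l₂.length) * plucker +
    (rowDet (p :: (l₁ ++ (l₂ ++ [w]))) * rowDet (l₁ ++ q :: u :: l₂) +
        rowDet (p :: (l₁ ++ q :: l₂)) * rowDet (l₁ ++ u :: (l₂ ++ [w])) -
        rowDet (p :: (l₁ ++ u :: l₂)) * rowDet (l₁ ++ q :: (l₂ ++ [w]))) * hsign

theorem rowDet_append_map_smul (l₁ l₂ : List (Fin a → R)) (c : R)
    (h : l₁.length + l₂.length = a) :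
    rowDet (l₁ ++ l₂.map (c • ·)) = ((-1) ^ (a - 1) * c) ^ l₂.length * rowDet (l₂ ++ l₁) := by
  induction l₂ generalizing l₁ with
  | nil => simp
  | cons x l₂ ih =>
    simp only [List.length_cons] at h
    have rotated := ih (l₁ ++ [c • x]) (by simp; omega)
    have hlen : (l₂ ++ l₁).length = a - 1 := by simp; omega
    have moved := rowDet_cons_append [] (l₂ ++ l₁) [] x (by simp; omega)
    have scaled : rowDet (l₂ ++ l₁ ++ [c • x]) = c * rowDet (l₂ ++ l₁ ++ [x]) := by
      simp only [← rowDetAt_apply (l₂ ++ l₁) [] (by omega), map_smul, smul_eq_mul]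
    have hsign : ((-1 : R) ^ (a - 1)) * (-1) ^ (a - 1) = 1 := by simp [← mul_pow]
    rw [hlen, List.append_nil, List.nil_append, List.nil_append] at moved
    rw [List.map_cons, List.append_cons, rotated, ← List.append_assoc, scaled, List.cons_append,
      moved, List.length_cons, pow_succ]
    linear_combination -(((-1) ^ (a - 1) * c) ^ l₂.length * c * rowDet (l₂ ++ l₁ ++ [x])) * hsign

end RowDeterminants

section Windows

/-- The list of the `n` consecutive terms `v t, …, v (t + n - 1)`. -/
def window {α : Type*} (v : ℕ → α) (t n : ℕ) : List α :=
  (List.range' t n).map v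

section

variable {α : Type*} (v : ℕ → α)

@[simp]
theorem window_zero (t : ℕ) : window v t 0 = [] := rfl

@[simp]
theorem length_window (t n : ℕ) : (window v t n).length = n := by simp [window]

theorem window_append_window (t m n : ℕ) :
    window v t m ++ window v (t + m) n = window v t (m + n) := by
  simp [window, ← List.map_append]

theorem window_succ (t n : ℕ) : window v t (n + 1) = v t :: window v (t + 1) n := rfl

theorem window_succ_last (t n : ℕ) : window v t (n + 1) = window v t n ++ [v (t + n)] :=
  (window_append_window v t n 1).symm

theorem window_congr {v w : ℕ → α} {t n : ℕ} (h : ∀ i, t ≤ i → i < t + n → v i = w i) :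
    window v t n = window w t n :=
  List.map_congr_left fun i hi => by
    rw [List.mem_range'_1] at hi
    exact h i hi.1 hi.2

end

variable {R : Type*} [CommRing R] {a : ℕ} (v : ℕ → Fin a → R)

/-- The maximal minor `det(v t, …, v (t + r - 1), v s, …, v (s + a - r - 1))` on two windows of a
sequence of vectors; it is meant for `r ≤ a`. -/
def windowDet (v : ℕ → Fin a → R) (t s r : ℕ) : R :=
  rowDet (window v t r ++ window v s (a - r))

theorem windowDet_zero (t s : ℕ) : windowDet v t s 0 = rowDet (window v s a) := by
  simp [windowDet]

theorem windowDet_self (t s : ℕ) : windowDet v t s a = rowDet (window v t a) := by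
  simp [windowDet]

theorem windowDet_add (t : ℕ) {r : ℕ} (hr : r ≤ a) :
    windowDet v t (t + r) r = rowDet (window v t a) := by
  rw [windowDet, window_append_window, Nat.add_sub_cancel' hr]

/-- Moving the second window past the first one costs a sign that the factor `(-1) ^ (a - 1)` in
the monodromy absorbs. -/
theorem windowDet_add_period {k : ℕ} {c : R} (hv : ∀ i, v (k + i) = ((-1) ^ (a - 1) * c) • v i)
    (t s : ℕ) {r : ℕ} (hr : r ≤ a) :
    windowDet v s (k + t) (a - r) = c ^ r * windowDet v t s r := by
  have hmonodromy : window v (k + t) r = (window v t r).map (((-1) ^ (a - 1) * c) • ·) := by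
    rw [window, window, List.map_map, ← List.map_add_range', List.map_map]
    exact List.map_congr_left fun i _ => hv i
  have hsign : (-1 : R) ^ (a - 1) * ((-1) ^ (a - 1) * c) = c := by
    rw [← mul_assoc, ← mul_pow]; simp
  rw [windowDet, Nat.sub_sub_self hr, hmonodromy, rowDet_append_map_smul _ _ _ (by simp [hr]),
    hsign, length_window, windowDet]

theorem windowDet_octahedron (t s : ℕ) {r : ℕ} (hr : r + 1 < a) :
    windowDet v t s (r + 1) * windowDet v (t + 1) (s + 1) (r + 1) =
      windowDet v t (s + 1) (r + 1) * windowDet v (t + 1) s (r + 1) +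
        windowDet v t (s + 1) (r + 2) * windowDet v (t + 1) s r := by
  obtain ⟨m, rfl⟩ : ∃ m, a = r + m + 2 := ⟨a - r - 2, by omega⟩
  have hm : r + m + 2 - (r + 1) = m + 1 := by omega
  have hm' : r + m + 2 - (r + 2) = m := by omega
  have hm'' : r + m + 2 - r = m + 2 := by omega
  have octahedron := rowDet_octahedron (window v (t + 1) r) (window v (s + 1) m)
    (by simp) (v t) (v (t + 1 + r)) (v s) (v (s + 1 + m))
  simp only [windowDet, hm, hm', hm'']
  rw [window_succ v t (r + 1), window_succ_last v (t + 1) r, window_succ v t r,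
    window_succ_last v (s + 1) m, window_succ v s (m + 1), window_succ_last v (s + 1) m,
    window_succ v s m]
  simpa using octahedron

theorem exists_forall_apply_eq_of_triangular {K : Type*} [Field K] {n : ℕ}
    (φ : Fin n → (Fin n → K) →ₗ[K] K) (hlt : ∀ i j, j < i → φ i (Pi.single j 1) = 0)
    (hself : ∀ i, φ i (Pi.single i 1) ≠ 0) (y : Fin n → K) : ∃ x, ∀ i, φ i x = y i := by
  set M := LinearMap.toMatrix' (LinearMap.pi φ) with hM
  have htriangular : M.IsUpperTriangular := fun i j hij => by
    simpa [hM, LinearMap.toMatrix'_apply] using hlt i j hij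
  have hdet : IsUnit M.det := by
    rw [Matrix.det_of_isUpperTriangular htriangular, isUnit_iff_ne_zero, Finset.prod_ne_zero_iff]
    intro i _
    simpa [hM, LinearMap.toMatrix'_apply] using hself i
  obtain ⟨x, hx⟩ :=
    Matrix.mulVec_surjective_iff_isUnit.2 ((Matrix.isUnit_iff_isUnit_det M).2 hdet) y
  refine ⟨x, fun i => ?_⟩
  rw [← hx, hM, LinearMap.toMatrix'_mulVec]
  rfl

theorem rowDet_window_single {v : ℕ → Fin a → R} (hv : ∀ i : Fin a, v i = Pi.single i 1) :
    rowDet (window v 0 a) = 1 := by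
  rw [rowDet, ← Matrix.det_one (n := Fin a)]
  congr 1
  ext i j
  simp [window, hv, Matrix.one_apply, Pi.single_apply, eq_comm]

theorem windowDet_congr {v w : ℕ → Fin a → R} {t s r : ℕ}
    (ht : ∀ i, t ≤ i → i < t + r → v i = w i) (hs : ∀ i, s ≤ i → i < s + (a - r) → v i = w i) :
    windowDet v t s r = windowDet w t s r := by
  rw [windowDet, windowDet, window_congr ht, window_congr hs]

theorem windowDet_update_last {n r : ℕ} (hr : r < a) (w : Fin a → R) :
    windowDet (Function.update v (a + n) w) 0 (n + 1 + r) r =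
      rowDetAt (window v 0 r ++ window v (n + 1 + r) (a - 1 - r)) [] (by simp; omega) w := by
  have heq (i : ℕ) (hi : i < a + n) : Function.update v (a + n) w i = v i :=
    Function.update_of_ne hi.ne _ _
  have hlast : n + 1 + r + (a - 1 - r) = a + n := by omega
  rw [rowDetAt_apply, windowDet, show a - r = a - 1 - r + 1 by omega, window_succ_last, hlast,
    Function.update_self, window_congr fun i _ hi => heq i (by omega),
    window_congr fun i _ hi => heq i (by omega), List.append_assoc]

variable {K : Type*} [Field K] {v : ℕ → Fin a → K}

theorem exists_windowDet_update_eq (hv : ∀ i : Fin a, v i = Pi.single i 1) {n : ℕ}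
    (hne : ∀ r < a, windowDet v 0 (n + 1 + r) (r + 1) ≠ 0) (y : Fin a → K) :
    ∃ w, ∀ r : Fin a, windowDet (Function.update v (a + n) w) 0 (n + 1 + r) r = y r := by
  simp only [fun w (r : Fin a) => windowDet_update_last (v := v) (n := n) r.2 w]
  refine exists_forall_apply_eq_of_triangular _ (fun r j hj => ?_) (fun r => ?_) y
  · have hmem : v j ∈ window v 0 r := by
      simpa [window] using ⟨(j : ℕ), hj, rfl⟩
    rw [← hv, rowDetAt_apply]
    exact rowDet_eq_zero_of_mem (List.mem_append_left _ hmem) (by simp; omega) _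
  · have hwindow : window v 0 r ++ [v r] = window v 0 (r + 1) := by
      rw [window_succ_last, Nat.zero_add]
    have moved := rowDet_cons_append (window v 0 r) (window v (n + 1 + r) (a - 1 - r)) [] (v r)
      (by simp; omega)
    rw [List.append_nil, List.append_cons, hwindow, Nat.sub_right_comm, Nat.sub_sub] at moved
    rw [← hv, rowDetAt_apply, List.append_assoc, Nat.sub_right_comm, Nat.sub_sub]
    exact right_ne_zero_of_mul (moved.symm.trans_ne (hne r r.2))

theorem exists_windowDet_eq (c : ℕ → ℕ → K) (hc : ∀ r s, c r s ≠ 0) (hdiag : ∀ r ≤ a, c r r = 1)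
    (htop : ∀ s, c a s = 1) (n : ℕ) :
    ∃ v : ℕ → Fin a → K, (∀ i : Fin a, v i = Pi.single i 1) ∧
      ∀ r s, r ≤ a → r ≤ s → s ≤ n + r → windowDet v 0 s r = c r s := by
  induction n with
  | zero =>
    let v : ℕ → Fin a → K := fun i => if h : i < a then Pi.single ⟨i, h⟩ 1 else 0
    have hv (i : Fin a) : v i = Pi.single i 1 := dif_pos i.2
    refine ⟨v, hv, fun r s hr hrs hsr => ?_⟩
    obtain rfl : r = s := by omega
    rw [hdiag r hr, ← rowDet_window_single hv, ← windowDet_add v 0 hr, Nat.zero_add]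
  | succ n ih =>
    obtain ⟨v, hv, hvc⟩ := ih
    have hne (r : ℕ) (hr : r < a) : windowDet v 0 (n + 1 + r) (r + 1) ≠ 0 := by
      rw [hvc (r + 1) _ hr (by omega) (by omega)]
      exact hc _ _
    obtain ⟨w, hw⟩ := exists_windowDet_update_eq hv hne fun r => c r (n + 1 + r)
    have heq (i : ℕ) (hi : i < a + n) : Function.update v (a + n) w i = v i :=
      Function.update_of_ne hi.ne _ _
    have hsingle (i : Fin a) : Function.update v (a + n) w i = Pi.single i 1 := by
      rw [heq i (by omega), hv]
    refine ⟨_, hsingle, fun r s hr hrs hsr => ?_⟩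
    rcases eq_or_lt_of_le hr with rfl | hra
    · rw [windowDet_self, rowDet_window_single hsingle, htop]
    rcases eq_or_lt_of_le hsr with rfl | hlt
    · exact hw ⟨r, hra⟩
    · rw [windowDet_congr (w := v) (fun i _ hi => heq i (by omega))
        (fun i _ hi => heq i (by omega))]
      exact hvc r s hr hrs (by omega)

end Windows

section Tropicalization

variable {Γ R : Type*} [LinearOrder Γ]

/-- `f` has a leading term `r X ^ e` with `r > 0`. On such series addition and multiplication
tropicalize to the minimum and the sum of exponents, without any cancellation. -/
def HasPosLeadingTerm [Zero R] [LT R] (f : HahnSeries Γ R) (e : Γ) : Prop :=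
  f.orderTop = e ∧ 0 < f.leadingCoeff

namespace HasPosLeadingTerm

theorem iff_coeff [Zero R] [Preorder R] {f : HahnSeries Γ R} {e : Γ} :
    HasPosLeadingTerm f e ↔ 0 < f.coeff e ∧ ∀ i < e, f.coeff i = 0 := by
  constructor
  · rintro ⟨horder, hpos⟩
    rw [HahnSeries.leadingCoeff, horder] at hpos
    exact ⟨hpos, fun i hi => HahnSeries.coeff_eq_zero_of_lt_orderTop (by simpa [horder])⟩
  · rintro ⟨hpos, hzero⟩
    have horder : f.orderTop = e := HahnSeries.orderTop_eq_of_le hpos.ne' fun i hi =>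
      not_lt.1 fun hlt => hi (hzero i hlt)
    refine ⟨horder, ?_⟩
    rwa [HahnSeries.leadingCoeff, horder]

theorem unique [Zero R] [LT R] {f : HahnSeries Γ R} {e e' : Γ} (h : HasPosLeadingTerm f e)
    (h' : HasPosLeadingTerm f e') : e = e' :=
  WithTop.coe_injective (h.1.symm.trans h'.1)

theorem single [Zero R] [Preorder R] (e : Γ) {r : R} (hr : 0 < r) :
    HasPosLeadingTerm (HahnSeries.single e r) e :=
  ⟨HahnSeries.orderTop_single hr.ne', by rwa [HahnSeries.leadingCoeff_of_single]⟩

theorem add [AddMonoid R] [Preorder R] [AddLeftStrictMono R] {f g : HahnSeries Γ R} {e e' : Γ}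
    (hf : HasPosLeadingTerm f e) (hg : HasPosLeadingTerm g e') :
    HasPosLeadingTerm (f + g) (min e e') := by
  rw [iff_coeff] at hf hg ⊢
  refine ⟨?_, fun i hi => ?_⟩
  · rw [HahnSeries.coeff_add]
    rcases lt_trichotomy e e' with hlt | rfl | hgt
    · simpa [min_eq_left hlt.le, hg.2 e hlt] using hf.1
    · simpa using Left.add_pos hf.1 hg.1
    · simpa [min_eq_right hgt.le, hf.2 e' hgt] using hg.1
  · rw [lt_min_iff] at hi
    rw [HahnSeries.coeff_add, hf.2 i hi.1, hg.2 i hi.2, add_zero]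

variable [AddCommMonoid Γ] [IsOrderedCancelAddMonoid Γ] [Ring R] [LinearOrder R]
  [IsStrictOrderedRing R] {f g : HahnSeries Γ R} {e e' : Γ}

theorem mul (hf : HasPosLeadingTerm f e) (hg : HasPosLeadingTerm g e') :
    HasPosLeadingTerm (f * g) (e + e') := by
  refine ⟨?_, ?_⟩
  · rw [HahnSeries.orderTop_mul, hf.1, hg.1, WithTop.coe_add]
  · rw [HahnSeries.leadingCoeff_mul]
    exact mul_pos hf.2 hg.2

theorem of_mul (hf : HasPosLeadingTerm f e) (hfg : HasPosLeadingTerm (f * g) (e + e')) :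
    HasPosLeadingTerm g e' := by
  obtain ⟨horder, hpos⟩ := hfg
  rw [HahnSeries.orderTop_mul, hf.1, WithTop.coe_add] at horder
  rw [HahnSeries.leadingCoeff_mul] at hpos
  exact ⟨WithTop.add_left_cancel WithTop.coe_ne_top horder, (mul_pos_iff_of_pos_left hf.2).1 hpos⟩

end HasPosLeadingTerm

end Tropicalization

section TropicalOctahedron

/-- The tropical octahedron recurrence with the boundary conditions of promotion: `H t r d` plays
the role of the number of entries at most `d` in the rows below the `r`-th one of the `t`-th
promotion of an `a × b` tableau with entries at most `k`. -/
structure IsTropicalOctahedron (a k : ℕ) (b : ℤ) (H : ℕ → ℕ → ℕ → ℤ) : Prop where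
  bottom (t d : ℕ) : H t a d = 0
  lower {t r d : ℕ} : d ≤ r → H t r d = 0
  upper {t r d : ℕ} : r ≤ a → k + r ≤ a + d → H t r d = H t 0 d - r * b
  total {t d : ℕ} : d + 1 < k →
    H (t + 1) 0 (d + 1) + H t 0 (d + 1) = H t 0 (d + 2) + H (t + 1) 0 d
  octahedron {t r d : ℕ} : r + 1 < a → d + 1 < k →
    H (t + 1) (r + 1) (d + 1) + H t (r + 1) (d + 1) =
      min (H t (r + 1) (d + 2) + H (t + 1) (r + 1) d) (H t (r + 2) (d + 2) + H (t + 1) r d)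

/-- A lift of the tropical recurrence `H` to minors of vectors over the Laurent series: the initial
values of `H` are the leading exponents of the minors `windowDet v 0 s r`, and the boundary
parameter `b` is the exponent of the monodromy. -/
structure IsOctahedronLift {a : ℕ} (k : ℕ) (b : ℤ) (H : ℕ → ℕ → ℕ → ℤ)
    (v : ℕ → Fin a → HahnSeries ℤ ℚ) : Prop where
  initial {r s : ℕ} : r ≤ a → r ≤ s → s + a ≤ k + r →
    HasPosLeadingTerm (windowDet v 0 s r) (H 0 r s)
  monodromy (i : ℕ) : v (k + i) = ((-1) ^ (a - 1) * HahnSeries.single b (1 : ℚ)) • v i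

theorem exists_quasiperiodic_extension {M G : Type*} [Monoid M] [MulAction M G] (u : ℕ → G)
    (γ : M) {k : ℕ} (hk : 0 < k) :
    ∃ v : ℕ → G, (∀ i < k, v i = u i) ∧ ∀ i, v (k + i) = γ • v i := by
  refine ⟨fun i => γ ^ (i / k) • u (i % k), fun i hi => ?_, fun i => ?_⟩
  · simp [Nat.div_eq_of_lt hi, Nat.mod_eq_of_lt hi]
  · simp only [Nat.add_mod_left, Nat.add_div_left i hk, pow_succ', mul_smul]

variable {a k : ℕ} {b : ℤ} {H : ℕ → ℕ → ℕ → ℤ}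

theorem HasPosLeadingTerm.single_one_pow_mul_iff (b : ℤ) (r : ℕ) {f : HahnSeries ℤ ℚ} {e : ℤ} :
    HasPosLeadingTerm (HahnSeries.single b (1 : ℚ) ^ r * f) (r * b + e) ↔
      HasPosLeadingTerm f e := by
  have hpow : HasPosLeadingTerm (HahnSeries.single b (1 : ℚ) ^ r) (r * b) := by
    simpa [HahnSeries.single_pow] using HasPosLeadingTerm.single (r * b) (zero_lt_one' ℚ)
  exact ⟨hpow.of_mul, hpow.mul⟩

namespace IsTropicalOctahedron

theorem exists_lift (h : IsTropicalOctahedron a k b H) (hak : a ≤ k) (hk : 0 < k) :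
    ∃ v : ℕ → Fin a → HahnSeries ℤ ℚ, IsOctahedronLift k b H v := by
  obtain ⟨u, -, hu⟩ := exists_windowDet_eq (a := a) (fun r s => HahnSeries.single (H 0 r s) (1 : ℚ))
    (fun r s => HahnSeries.single_ne_zero one_ne_zero)
    (fun r _ => by rw [h.lower le_rfl, HahnSeries.single_zero_one])
    (fun s => by rw [h.bottom, HahnSeries.single_zero_one]) (k - a)
  obtain ⟨v, hvu, hv⟩ := exists_quasiperiodic_extension u
    ((-1) ^ (a - 1) * HahnSeries.single b (1 : ℚ)) hk
  refine ⟨v, fun {r s} hr hrs hs => ?_, hv⟩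
  rw [windowDet_congr (w := u) (fun i _ hi => hvu i (by omega)) (fun i _ hi => hvu i (by omega)),
    hu r s hr hrs (by omega)]
  exact .single _ one_pos

theorem apply_zero_eq_sub (h : IsTropicalOctahedron a k b H) {t d : ℕ} (htd : t + d ≤ k) :
    H t 0 d = H 0 0 (t + d) - H 0 0 t := by
  induction t generalizing d with
  | zero => simp [h.lower]
  | succ t ih =>
    induction d with
    | zero => simp [h.lower]
    | succ d ihd =>
      have htotal := h.total (t := t) (d := d) (by omega)
      have hleft := ihd (by omega)
      have hdown := ih (d := d + 1) (by omega)
      have hright := ih (d := d + 2) (by omega)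
      rw [show t + (d + 1) = t + 1 + d by omega] at hdown
      rw [show t + (d + 2) = t + 1 + (d + 1) by omega] at hright
      linarith

theorem apply_zero_top (h : IsTropicalOctahedron a k b H) (t : ℕ) : H t 0 k = a * b := by
  have := h.upper (t := t) le_rfl (add_comm k a).le
  rw [h.bottom] at this
  linarith

end IsTropicalOctahedron

namespace IsOctahedronLift

variable {v : ℕ → Fin a → HahnSeries ℤ ℚ}

theorem hasPosLeadingTerm_windowDet_add_period_iff (hv : IsOctahedronLift k b H v) (t s : ℕ)
    {r : ℕ} (hr : r ≤ a) {e : ℤ} :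
    HasPosLeadingTerm (windowDet v s (k + t) (a - r)) (r * b + e) ↔
      HasPosLeadingTerm (windowDet v t s r) e := by
  rw [windowDet_add_period v hv.monodromy t s hr, HasPosLeadingTerm.single_one_pow_mul_iff]

theorem hasPosLeadingTerm_rowDet_window (hv : IsOctahedronLift k b H v)
    (h : IsTropicalOctahedron a k b H) (hak : a ≤ k) {u : ℕ} (hu : u ≤ k) :
    HasPosLeadingTerm (rowDet (window v u a)) (H 0 0 u) := by
  rcases le_total (u + a) k with huk | huk
  · rw [← windowDet_zero v 0]
    exact hv.initial (Nat.zero_le a) (Nat.zero_le u) huk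
  obtain ⟨r, hr⟩ := Nat.exists_eq_add_of_le huk
  have hsplit := windowDet_add v u (Nat.sub_le a r)
  rw [show u + (a - r) = k + 0 by omega] at hsplit
  have hupper := h.upper (t := 0) (r := r) (d := u) (by omega) (by omega)
  rw [← hsplit, show H 0 0 u = r * b + H 0 r u by omega,
    hv.hasPosLeadingTerm_windowDet_add_period_iff 0 u (by omega)]
  exact hv.initial (by omega) (by omega) (by omega)

theorem hasPosLeadingTerm_windowDet_of_boundary (hv : IsOctahedronLift k b H v)
    (h : IsTropicalOctahedron a k b H) (hak : a ≤ k) {t r d : ℕ} (hr : r ≤ a)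
    (hrd : r ≤ d) (htd : t + d ≤ k)
    (hboundary : r = 0 ∨ r = a ∨ r = d ∨ d + a = k + r) :
    HasPosLeadingTerm (windowDet v t (t + d) r) (H t r d + H 0 0 t) := by
  have htotal := h.apply_zero_eq_sub htd
  rcases hboundary with rfl | rfl | rfl | hd
  · rw [windowDet_zero, htotal, sub_add_cancel]
    exact hv.hasPosLeadingTerm_rowDet_window h hak htd
  · rw [windowDet_self, h.bottom, zero_add]
    exact hv.hasPosLeadingTerm_rowDet_window h hak (by omega)
  · rw [windowDet_add v t hr, h.lower le_rfl, zero_add]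
    exact hv.hasPosLeadingTerm_rowDet_window h hak (by omega)
  · have hsplit := windowDet_add v (t + d) (Nat.sub_le a r)
    rw [show t + d + (a - r) = k + t by omega] at hsplit
    have hupper := h.upper (t := t) hr (by omega : k + r ≤ a + d)
    rw [← hv.hasPosLeadingTerm_windowDet_add_period_iff t (t + d) hr, hsplit,
      show r * b + (H t r d + H 0 0 t) = H 0 0 (t + d) by linarith]
    exact hv.hasPosLeadingTerm_rowDet_window h hak htd

theorem hasPosLeadingTerm_windowDet (hv : IsOctahedronLift k b H v)
    (h : IsTropicalOctahedron a k b H) (hak : a ≤ k) {t r d : ℕ} (hr : r ≤ a)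
    (hrd : r ≤ d) (hd : d + a ≤ k + r) (htd : t + d ≤ k) :
    HasPosLeadingTerm (windowDet v t (t + d) r) (H t r d + H 0 0 t) := by
  induction t generalizing r d with
  | zero =>
    rw [h.lower le_rfl, add_zero, Nat.zero_add]
    exact hv.initial hr hrd hd
  | succ t iht =>
    induction d generalizing r with
    | zero => exact hv.hasPosLeadingTerm_windowDet_of_boundary h hak hr hrd htd (by omega)
    | succ d ihd =>
      by_cases hboundary : r = 0 ∨ r = a ∨ r = d + 1 ∨ d + 1 + a = k + r
      · exact hv.hasPosLeadingTerm_windowDet_of_boundary h hak hr hrd htd hboundary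
      obtain ⟨r, rfl⟩ : ∃ r', r = r' + 1 := ⟨r - 1, by omega⟩
      have hra : r + 1 < a := by omega
      have hold_start : t + (d + 1) = t + 1 + d := by omega
      have holdRight_start : t + (d + 2) = t + 1 + d + 1 := by omega
      have hold := iht (r := r + 1) (d := d + 1) hr (by omega) (by omega) (by omega)
      have holdRight := iht (r := r + 1) (d := d + 2) hr (by omega) (by omega) (by omega)
      have holdRightNext :=
        iht (r := r + 2) (d := d + 2) (by omega) (by omega) (by omega) (by omega)
      have hnewLeft := ihd (r := r + 1) hr (by omega) (by omega) (by omega)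
      have hnewLeftPrev := ihd (r := r) (by omega) (by omega) (by omega) (by omega)
      have hexponent : H t (r + 1) (d + 1) + H 0 0 t +
          (H (t + 1) (r + 1) (d + 1) + H 0 0 (t + 1)) =
            min (H t (r + 1) (d + 2) + H 0 0 t + (H (t + 1) (r + 1) d + H 0 0 (t + 1)))
              (H t (r + 2) (d + 2) + H 0 0 t + (H (t + 1) r d + H 0 0 (t + 1))) := by
        have := h.octahedron (t := t) hra (by omega : d + 1 < k)
        omega
      rw [hold_start] at hold
      rw [holdRight_start] at holdRight holdRightNext
      refine hold.of_mul ?_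
      rw [← Nat.add_assoc (t + 1), windowDet_octahedron v t (t + 1 + d) hra, hexponent]
      exact (holdRight.mul hnewLeft).add (holdRightNext.mul hnewLeftPrev)

end IsOctahedronLift

theorem IsTropicalOctahedron.reciprocity (h : IsTropicalOctahedron a k b H) (hak : a ≤ k)
    (hk : 0 < k) {r t : ℕ} (hr : r ≤ a) (ht : t ≤ k) :
    H t (a - r) (k - t) = H 0 r t - H 0 0 t + r * b := by
  rcases lt_or_ge t r with htr | hrt
  · have hupper := h.upper (t := t) (Nat.sub_le a r) (by omega : k + (a - r) ≤ a + (k - t))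
    rw [h.apply_zero_eq_sub (Nat.add_sub_of_le ht).le, Nat.add_sub_of_le ht, h.apply_zero_top,
      Nat.cast_sub hr] at hupper
    rw [hupper, h.lower htr.le]
    ring
  rcases lt_or_ge (k + r) (a + t) with hlt | hge
  · rw [h.lower (by omega : k - t ≤ a - r), h.upper hr hlt.le]
    ring
  obtain ⟨v, hv⟩ := h.exists_lift hak hk
  have hpromoted := hv.hasPosLeadingTerm_windowDet h hak (t := t) (Nat.sub_le a r)
    (by omega : a - r ≤ k - t) (by omega) (by omega)
  have hinitial := (hv.hasPosLeadingTerm_windowDet_add_period_iff 0 t hr).2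
    (hv.initial hr hrt (by omega))
  rw [Nat.add_sub_of_le ht] at hpromoted
  have := hpromoted.unique hinitial
  linarith

end TropicalOctahedron

section GelfandTsetlin

/-- Gelfand–Tsetlin patterns of `a × b` tableaux with entries at most `k`: for `1 ≤ x ≤ a`,
`L x d` is the number of entries at most `d` in the `x`-th row. The rows outside `1, …, a` are
sentinels, full above the tableau and empty below it. -/
structure IsGTPattern (a b k : ℕ) (L : ℕ → ℤ → ℤ) : Prop where
  top (d : ℤ) : L 0 d = b
  bottom {x : ℕ} (d : ℤ) : a < x → L x d = 0
  empty (x : ℕ) {d : ℤ} : d ≤ 0 → L (x + 1) d = 0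
  full {x : ℕ} {d : ℤ} : x < a → k ≤ d → L (x + 1) d = b
  le_succ (x : ℕ) (d : ℤ) : L x d ≤ L x (d + 1)
  interlace (x : ℕ) (d : ℤ) : L (x + 1) (d + 1) ≤ L x d

/-- The filling `T` has rows as counted by `L`, each weakly increasing. Rows are indexed from `0`
in `T` and from `1` in `L`. -/
def HasGTPattern {a b : ℕ} (T : Fin a → Fin b → ℤ) (L : ℕ → ℤ → ℤ) : Prop :=
  ∀ x y d, T x y ≤ d ↔ (y : ℤ) < L (x + 1) d

/-- The piecewise-linear toggle of the `j`-th diagonal: each entry is reflected in the interval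
that its neighbours allow. It is the action of the Bender–Knuth involution `bk` on patterns. -/
def toggle (j : ℤ) (L : ℕ → ℤ → ℤ) : ℕ → ℤ → ℤ
  | 0, d => L 0 d
  | x + 1, d =>
    if d = j then
      min (L (x + 1) (j + 1)) (L x (j - 1)) + max (L (x + 1) (j - 1)) (L (x + 2) (j + 1)) -
        L (x + 1) j
    else L (x + 1) d

/-- The toggles `1, …, n` in this order; promotion is the case `n = k - 1`. -/
def toggles : ℕ → (ℕ → ℤ → ℤ) → ℕ → ℤ → ℤ
  | 0, L => L
  | n + 1, L => toggle (n + 1) (toggles n L)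

theorem toggle_of_ne {j d : ℤ} (hd : d ≠ j) (L : ℕ → ℤ → ℤ) (x : ℕ) : toggle j L x d = L x d := by
  cases x with
  | zero => rfl
  | succ x => exact if_neg hd

theorem toggle_succ_self (j : ℤ) (L : ℕ → ℤ → ℤ) (x : ℕ) :
    toggle j L (x + 1) j = min (L (x + 1) (j + 1)) (L x (j - 1)) +
      max (L (x + 1) (j - 1)) (L (x + 2) (j + 1)) - L (x + 1) j :=
  if_pos rfl

theorem toggles_of_lt {n : ℕ} {d : ℤ} (hd : n < d) (L : ℕ → ℤ → ℤ) (x : ℕ) :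
    toggles n L x d = L x d := by
  induction n with
  | zero => rfl
  | succ n ih => rw [toggles, toggle_of_ne (by omega), ih (by omega)]

theorem toggles_eq_of_le {m n : ℕ} (hmn : m ≤ n) {d : ℤ} (hd : d ≤ m) (L : ℕ → ℤ → ℤ) (x : ℕ) :
    toggles n L x d = toggles m L x d := by
  induction n, hmn using Nat.le_induction with
  | base => rfl
  | succ n hmn ih => rw [toggles, toggle_of_ne (by omega), ih]

theorem toggles_add_eq {n d : ℕ} (hd : d < n) (L : ℕ → ℤ → ℤ) (x : ℕ) :
    toggles n L (x + 1) (d + 1) + L (x + 1) (d + 1) =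
      min (L (x + 1) (d + 2)) (toggles n L x d) +
        max (toggles n L (x + 1) d) (L (x + 2) (d + 2)) := by
  rw [toggles_eq_of_le (m := d + 1) hd (by simp), toggles_eq_of_le (m := d) hd.le le_rfl,
    toggles_eq_of_le (m := d) hd.le le_rfl, toggles, toggle_succ_self]
  simp only [toggles_of_lt (n := d) (lt_add_one _), add_sub_cancel_right, add_assoc,
    one_add_one_eq_two, toggles_of_lt (n := d) (show (d : ℤ) < d + 2 by omega)]
  ring

variable {a b k : ℕ} {L : ℕ → ℤ → ℤ}

namespace IsGTPattern

protected theorem monotone (h : IsGTPattern a b k L) (x : ℕ) : Monotone (L x) :=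
  monotone_int_of_le_succ (h.le_succ x)

theorem interlace_pred (h : IsGTPattern a b k L) (x : ℕ) (d : ℤ) : L (x + 1) d ≤ L x (d - 1) := by
  simpa using h.interlace x (d - 1)

protected theorem antitone (h : IsGTPattern a b k L) (d : ℤ) : Antitone (L · d) :=
  antitone_nat_of_succ_le fun x => (h.le_succ (x + 1) d).trans (h.interlace x d)

theorem nonneg (h : IsGTPattern a b k L) (x : ℕ) (d : ℤ) : 0 ≤ L x d := by
  rw [← h.bottom d (show a < x + a + 1 by omega)]
  exact h.antitone d (by omega)

theorem le_width (h : IsGTPattern a b k L) (x : ℕ) (d : ℤ) : L x d ≤ b := by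
  rw [← h.top d]
  exact h.antitone d (Nat.zero_le x)

theorem eq_zero_of_le (h : IsGTPattern a b k L) {x : ℕ} {d : ℤ} (hd : d ≤ x) :
    L (x + 1) d = 0 := by
  induction x generalizing d with
  | zero => exact h.empty 0 (by simpa using hd)
  | succ x ih =>
    have := h.interlace_pred (x + 1) d
    rw [ih (by push_cast at hd; omega)] at this
    exact le_antisymm this (h.nonneg _ _)

theorem eq_width_of_le (h : IsGTPattern a b k L) {x : ℕ} {d : ℤ} (hx : x < a)
    (hd : k + x + 1 ≤ a + d) : L (x + 1) d = b := by
  induction hm : a - x generalizing x d with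
  | zero => omega
  | succ m ih =>
    rcases eq_or_lt_of_le (Nat.succ_le_of_lt hx) with rfl | hxa
    · exact h.full hx (by push_cast at hd; omega)
    have := h.interlace (x + 1) d
    rw [ih hxa (by push_cast; omega) (by omega)] at this
    exact le_antisymm (h.le_width _ _) this

theorem lower_le (h : IsGTPattern a b k L) (j : ℤ) (x : ℕ) :
    max (L (x + 1) (j - 1)) (L (x + 2) (j + 1)) ≤ L (x + 1) j :=
  max_le (h.monotone _ (sub_one_lt j).le) (h.interlace _ _)

theorem le_upper (h : IsGTPattern a b k L) (j : ℤ) (x : ℕ) :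
    L (x + 1) j ≤ min (L (x + 1) (j + 1)) (L x (j - 1)) :=
  le_min (h.le_succ _ _) (h.interlace_pred _ _)

theorem toggle_mem_Icc (h : IsGTPattern a b k L) (j : ℤ) (x : ℕ) :
    toggle j L (x + 1) j ∈ Set.Icc (max (L (x + 1) (j - 1)) (L (x + 2) (j + 1)))
      (min (L (x + 1) (j + 1)) (L x (j - 1))) := by
  have hlower := h.lower_le j x
  have hupper := h.le_upper j x
  rw [toggle_succ_self, Set.mem_Icc]
  constructor <;> linarith

protected theorem toggle (h : IsGTPattern a b k L) {j : ℤ} (hj : 1 ≤ j) (hjk : j < k) :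
    IsGTPattern a b k (toggle j L) where
  top d := h.top d
  bottom {x} d hx := by
    obtain ⟨x, rfl⟩ : ∃ x', x = x' + 1 := ⟨x - 1, by omega⟩
    rcases eq_or_ne d j with rfl | hd
    · have hmem := h.toggle_mem_Icc d x
      rw [h.bottom _ hx, h.bottom _ (by omega), h.bottom _ hx, max_self,
        min_eq_left (h.nonneg _ _)] at hmem
      exact le_antisymm hmem.2 hmem.1
    · rw [toggle_of_ne hd, h.bottom d hx]
  empty x d hd := by rw [toggle_of_ne (by omega), h.empty x hd]
  full hx hd := by rw [toggle_of_ne (by omega), h.full hx hd]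
  le_succ x d := by
    rcases x with _ | x
    · exact h.le_succ 0 d
    rcases eq_or_ne d j with rfl | hd
    · rw [toggle_of_ne (show d + 1 ≠ d by omega)]
      exact (h.toggle_mem_Icc d x).2.trans (min_le_left _ _)
    rcases eq_or_ne (d + 1) j with rfl | hd'
    · rw [toggle_of_ne hd]
      simpa using (le_max_left _ _).trans (h.toggle_mem_Icc (d + 1) x).1
    · rw [toggle_of_ne hd, toggle_of_ne hd']
      exact h.le_succ (x + 1) d
  interlace x d := by
    rcases eq_or_ne (d + 1) j with rfl | hd'
    · rw [toggle_of_ne (show d ≠ d + 1 by omega)]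
      simpa using (h.toggle_mem_Icc (d + 1) x).2.trans (min_le_right _ _)
    rw [toggle_of_ne hd']
    rcases x with _ | x
    · exact h.interlace 0 d
    rcases eq_or_ne d j with rfl | hd
    · exact (le_max_right _ _).trans (h.toggle_mem_Icc d x).1
    · rw [toggle_of_ne hd]
      exact h.interlace (x + 1) d

protected theorem toggles (h : IsGTPattern a b k L) {n : ℕ} (hn : n + 1 ≤ k) :
    IsGTPattern a b k (toggles n L) := by
  induction n with
  | zero => exact h
  | succ n ih => exact (ih (by omega)).toggle (by omega) (by omega)

end IsGTPattern

end GelfandTsetlin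

section BenderKnuth

theorem card_filter_fin_mem_Ico {b : ℕ} {p q : ℤ} (hp : 0 ≤ p) (hpq : p ≤ q) (hq : q ≤ b) :
    (Finset.card {y : Fin b | p ≤ y ∧ (y : ℤ) < q} : ℤ) = q - p := by
  lift p to ℕ using hp
  lift q to ℕ using by omega
  have hmap : Finset.map Fin.valEmbedding {y : Fin b | (p : ℤ) ≤ y ∧ (y : ℤ) < q} =
      Finset.Ico p q := by
    ext m
    simp only [Finset.mem_map, Finset.mem_filter_univ, Fin.valEmbedding_apply, Finset.mem_Ico]
    exact ⟨fun ⟨y, hy, hm⟩ => by omega, fun hm => ⟨⟨m, by omega⟩, by dsimp only; omega, rfl⟩⟩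
  rw [← Finset.card_map, hmap, Nat.card_Ico]
  omega

variable {a b k : ℕ} {T : Fin a → Fin b → ℤ} {L : ℕ → ℤ → ℤ}

namespace HasGTPattern

theorem freeLow_iff (hT : HasGTPattern T L) (hL : IsGTPattern a b k L) (j : ℤ) (x : Fin a)
    (y : Fin b) :
    (T x y = j ∧ ∀ h : (x : ℕ) + 1 < a, T ⟨(x : ℕ) + 1, h⟩ y ≠ j + 1) ↔
      max (L (x + 1) (j - 1)) (L (x + 2) (j + 1)) ≤ y ∧ (y : ℤ) < L (x + 1) j := by
  have hle := hT x y j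
  have hlt := hT x y (j - 1)
  rcases Nat.lt_or_ge (x + 1) a with hx | hx
  · have hbelow : ∀ d, T ⟨x + 1, hx⟩ y ≤ d ↔ (y : ℤ) < L (x + 2) d := hT ⟨x + 1, hx⟩ y
    have hbelow_le := hbelow (j + 1)
    have hbelow_lt := hbelow j
    have hinterlace : L (x + 2) j ≤ L (x + 1) (j - 1) := hL.interlace_pred (x + 1) j
    simp only [hx, forall_true_left]
    omega
  · have hbottom : L (x + 2) (j + 1) = 0 := hL.bottom _ (by omega)
    simp only [hx.not_gt, IsEmpty.forall_iff, and_true]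
    omega

theorem freeHigh_iff (hT : HasGTPattern T L) (hL : IsGTPattern a b k L) (j : ℤ) (x : Fin a)
    (y : Fin b) :
    (T x y = j + 1 ∧ ∀ x' : Fin a, (x' : ℕ) + 1 = (x : ℕ) → T x' y ≠ j) ↔
      L (x + 1) j ≤ y ∧ (y : ℤ) < min (L (x + 1) (j + 1)) (L x (j - 1)) := by
  have hle := hT x y (j + 1)
  have hlt := hT x y j
  obtain ⟨x, hx⟩ := x
  rcases x with _ | x
  · have htop : L 0 (j - 1) = b := hL.top _
    have hy := y.isLt
    simp only [Nat.succ_ne_zero, IsEmpty.forall_iff, implies_true, and_true, zero_add] at *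
    omega
  · have habove : (∀ x' : Fin a, (x' : ℕ) + 1 = x + 1 → T x' y ≠ j) ↔ T ⟨x, by omega⟩ y ≠ j :=
      ⟨fun h => h _ rfl, fun h x' hx' => by convert h; omega⟩
    have habove_le := hT ⟨x, by omega⟩ y j
    have habove_lt := hT ⟨x, by omega⟩ y (j - 1)
    have hinterlace : L (x + 1 + 1) (j + 1) ≤ L (x + 1) j := hL.interlace _ _
    simp only [habove] at *
    omega

theorem bk_apply (hT : HasGTPattern T L) (hL : IsGTPattern a b k L) (j : ℤ) (x : Fin a)
    (y : Fin b) :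
    bk a b j T x y =
      if max (L (x + 1) (j - 1)) (L (x + 2) (j + 1)) ≤ y ∧
          (y : ℤ) < min (L (x + 1) (j + 1)) (L x (j - 1)) then
        if (y : ℤ) < toggle j L (x + 1) j then j else j + 1
      else T x y := by
  have hnonneg := hL.nonneg (x + 1) (j - 1)
  have hwidth := hL.le_width (x + 1) (j + 1)
  have hlower : max (L (x + 1) (j - 1)) (L (x + 2) (j + 1)) ≤ L (x + 1) j := hL.lower_le j x
  have hupper := hL.le_upper j x
  rw [bk, toggle_succ_self]
  simp only [hT.freeLow_iff hL, hT.freeHigh_iff hL]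
  set p := max (L (x + 1) (j - 1)) (L (x + 2) (j + 1))
  set m := L (x + 1) j
  set q := min (L (x + 1) (j + 1)) (L x (j - 1))
  have hfree (y' : Fin b) : p ≤ y' ∧ (y' : ℤ) < m ∨ m ≤ y' ∧ (y' : ℤ) < q ↔
      p ≤ y' ∧ (y' : ℤ) < q := by omega
  simp only [hfree]
  refine if_ctx_congr Iff.rfl (fun hy => ?_) fun _ => rfl
  have hrank_iff (y' : Fin b) : (p ≤ y' ∧ (y' : ℤ) < q) ∧ y' ≤ y ↔
      p ≤ y' ∧ (y' : ℤ) < y + 1 := by omega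
  have hrank := card_filter_fin_mem_Ico (b := b) (p := p) (q := y + 1) (by omega) (by omega)
    (by omega)
  have hhigh := card_filter_fin_mem_Ico (b := b) (p := m) (q := q) (by omega) (by omega)
    (by omega)
  simp only [hrank_iff]
  exact if_congr (by omega) rfl rfl

protected theorem bk (hT : HasGTPattern T L) (hL : IsGTPattern a b k L) (j : ℤ) :
    HasGTPattern (bk a b j T) (toggle j L) := by
  intro x y d
  have hlower : max (L (x + 1) (j - 1)) (L (x + 2) (j + 1)) ≤ L (x + 1) j := hL.lower_le j x
  have hupper := hL.le_upper j x
  have hmem := Set.mem_Icc.1 (hL.toggle_mem_Icc j x)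
  have hTj := hT x y j
  have hTd := hT x y d
  rw [hT.bk_apply hL]
  rcases eq_or_ne d j with rfl | hd
  · split_ifs <;> omega
  rw [toggle_of_ne hd]
  have hlow : d ≤ j - 1 → L (x + 1) d ≤ L (x + 1) (j - 1) := fun h => hL.monotone _ h
  have hhigh : j + 1 ≤ d → L (x + 1) (j + 1) ≤ L (x + 1) d := fun h => hL.monotone _ h
  split_ifs <;> omega

theorem foldl_bk (hT : HasGTPattern T L) (hL : IsGTPattern a b k L) {n : ℕ} (hn : n + 1 ≤ k) :
    HasGTPattern (((List.range n).map Nat.cast).foldl (fun S (i : ℤ) => bk a b (i + 1) S) T)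
      (toggles n L) := by
  induction n with
  | zero => exact hT
  | succ n ih =>
    rw [List.range_succ, List.map_append, List.foldl_append]
    exact (ih (by omega)).bk (hL.toggles (by omega)) _

protected theorem pro (hT : HasGTPattern T L) (hL : IsGTPattern a b k L) (hk : 0 < k) :
    HasGTPattern (pro a b k T) (toggles (k - 1) L) := by
  have hcast : (do let i ← List.range (k - 1); pure (i : ℤ)) = (List.range (k - 1)).map Nat.cast :=
    List.flatMap_pure_eq_map _ _
  rw [pro, hcast]
  exact hT.foldl_bk hL (by omega)

theorem isSSYT (hT : HasGTPattern T L) (hL : IsGTPattern a b k L) : IsSSYT a b k T := by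
  refine ⟨fun x y => ⟨?_, ?_⟩, fun x y y' hy => ?_, fun y x x' hx => ?_⟩
  · by_contra! hlt
    have hy := (hT x y 0).1 (by omega)
    rw [hL.empty x le_rfl] at hy
    omega
  · rw [hT, hL.full x.isLt le_rfl]
    exact_mod_cast y.isLt
  · rw [hT]
    exact lt_of_le_of_lt (by exact_mod_cast hy) ((hT x y' _).1 le_rfl)
  · have hrow : L (x' + 1) (T x' y) ≤ L (x + 1) (T x' y - 1) :=
      (hL.antitone _ (show (x : ℕ) + 2 ≤ x' + 1 by simpa using hx)).trans (hL.interlace_pred _ _)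
    exact Int.lt_of_le_sub_one ((hT x y _).2 (((hT x' y _).1 le_rfl).trans_le hrow))

theorem bcount_eq (hT : HasGTPattern T L) (hL : IsGTPattern a b k L) (x : Fin a) (d : ℤ) :
    (bcount a b T x d : ℤ) = b - L (x + 1) d := by
  have hiff (y : Fin b) : d < T x y ↔ L (x + 1) d ≤ y ∧ (y : ℤ) < b := by
    have := hT x y d
    omega
  simp only [bcount, hiff]
  exact card_filter_fin_mem_Ico (hL.nonneg _ _) (hL.le_width _ _) le_rfl

end HasGTPattern

/-- The Gelfand–Tsetlin pattern of a filling, including its sentinel rows. -/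
noncomputable def gtPattern (T : Fin a → Fin b → ℤ) : ℕ → ℤ → ℤ
  | 0, _ => b
  | x + 1, d => if h : x < a then Finset.card {y | T ⟨x, h⟩ y ≤ d} else 0

theorem IsSSYT.hasGTPattern (hT : IsSSYT a b k T) : HasGTPattern T (gtPattern T) := by
  intro x y d
  rw [gtPattern, dif_pos x.isLt, Nat.cast_lt]
  exact (Tuple.lt_card_le_iff_apply_le_of_monotone (hT.2.1 x)).symm

theorem IsSSYT.isGTPattern (hT : IsSSYT a b k T) : IsGTPattern a b k (gtPattern T) where
  top d := rfl
  bottom {x} d hx := by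
    obtain ⟨x, rfl⟩ : ∃ x', x = x' + 1 := ⟨x - 1, by omega⟩
    exact dif_neg (by omega)
  empty x d hd := by
    rw [gtPattern]
    split_ifs with hx
    · have hpos (y : Fin b) : ¬T ⟨x, hx⟩ y ≤ d := by
        have := (hT.1 ⟨x, hx⟩ y).1
        omega
      simp only [hpos, Finset.filter_false, Finset.card_empty, Nat.cast_zero]
    · rfl
  full {x d} hx hd := by
    have hle (y : Fin b) : T ⟨x, hx⟩ y ≤ d := (hT.1 ⟨x, hx⟩ y).2.trans hd
    simp only [gtPattern, dif_pos hx, hle, Finset.filter_true, Finset.card_univ, Fintype.card_fin]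
  le_succ x d := by
    rcases x with _ | x
    · rfl
    rw [gtPattern, gtPattern]
    split_ifs with hx
    · refine mod_cast Finset.card_le_card (Finset.monotone_filter_right _ fun y _ hy => ?_)
      exact hy.trans (lt_add_one d).le
    · rfl
  interlace x d := by
    rw [gtPattern]
    split_ifs with hx
    · rcases x with _ | x
      · exact Nat.cast_le.2 ((Finset.card_le_univ _).trans_eq (Fintype.card_fin b))
      rw [gtPattern, dif_pos (by omega)]
      refine mod_cast Finset.card_le_card (Finset.monotone_filter_right _ fun y _ hy => ?_)
      exact Int.lt_add_one_iff.1 ((hT.2.2 y ⟨x, _⟩ ⟨x + 1, hx⟩ (Nat.lt_succ_self x)).trans_le hy)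
    · rcases x with _ | x
      · exact Nat.cast_nonneg _
      · rw [gtPattern]
        split_ifs <;> simp

end BenderKnuth

section Promotion

/-- The number of entries at most `d` in the rows `r + 1, …, a`. Summed from the bottom, the toggle
rule turns into the tropical octahedron recurrence. -/
def tailSum (a : ℕ) (L : ℕ → ℤ → ℤ) (r : ℕ) (d : ℤ) : ℤ :=
  ∑ x ∈ Finset.Ico r a, L (x + 1) d

variable {a b k : ℕ} {L : ℕ → ℤ → ℤ}

theorem tailSum_of_le {r : ℕ} (hr : a ≤ r) (L : ℕ → ℤ → ℤ) (d : ℤ) : tailSum a L r d = 0 := by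
  rw [tailSum, Finset.Ico_eq_empty (by omega), Finset.sum_empty]

namespace IsGTPattern

theorem tailSum_eq_add (h : IsGTPattern a b k L) (r : ℕ) (d : ℤ) :
    tailSum a L r d = L (r + 1) d + tailSum a L (r + 1) d := by
  rcases lt_or_ge r a with hr | hr
  · exact Finset.sum_eq_sum_Ico_succ_bot hr _
  · rw [tailSum_of_le hr, tailSum_of_le (by omega), h.bottom d (by omega), add_zero]

theorem tailSum_eq_zero (h : IsGTPattern a b k L) {r : ℕ} {d : ℤ} (hd : d ≤ r) :
    tailSum a L r d = 0 := by
  refine Finset.sum_eq_zero fun x hx => h.eq_zero_of_le ?_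
  have := (Finset.mem_Ico.1 hx).1
  omega

theorem tailSum_eq_sub (h : IsGTPattern a b k L) {r : ℕ} {d : ℤ} (hr : r ≤ a)
    (hd : k + r ≤ a + d) : tailSum a L r d = tailSum a L 0 d - r * b := by
  have hhead : ∑ x ∈ Finset.Ico 0 r, L (x + 1) d = r * b := by
    rw [← Finset.range_eq_Ico, Finset.sum_eq_card_nsmul (b := (b : ℤ)), Finset.card_range,
      nsmul_eq_mul]
    intro x hx
    have := Finset.mem_range.1 hx
    exact h.eq_width_of_le (by omega) (by omega)
  rw [tailSum, tailSum, ← Finset.sum_Ico_consecutive _ (Nat.zero_le r) hr, hhead]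
  ring

theorem tailSum_toggles_add (h : IsGTPattern a b k L) {r n d : ℕ} (hn : n + 1 ≤ k) (hd : d < n)
    (hr : r ≤ a) :
    tailSum a (toggles n L) r (d + 1) + tailSum a L r (d + 1) =
      min (L (r + 1) (d + 2)) (toggles n L r d) + tailSum a (toggles n L) r d +
        tailSum a L (r + 1) (d + 2) := by
  have htoggles := h.toggles hn
  induction hr using Nat.decreasingInduction with
  | self =>
    rw [h.bottom _ (lt_add_one a), min_eq_left (htoggles.nonneg a d)]
    simp only [tailSum_of_le, le_refl, a.le_succ, add_zero]
  | of_succ r _ ih =>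
    have hrow := toggles_add_eq hd L r
    have hminmax := min_add_max (L (r + 2) (d + 2)) (toggles n L (r + 1) d)
    rw [max_comm] at hminmax
    have htail := h.tailSum_eq_add (r + 1) (d + 2)
    rw [h.tailSum_eq_add r, htoggles.tailSum_eq_add r, htoggles.tailSum_eq_add r]
    linarith

theorem iterate_toggles (h : IsGTPattern a b k L) {n : ℕ} (hn : n + 1 ≤ k) (t : ℕ) :
    IsGTPattern a b k ((toggles n)^[t] L) :=
  Function.Iterate.rec (IsGTPattern a b k) h (fun _ hM => hM.toggles hn) t

theorem isTropicalOctahedron (h : IsGTPattern a b k L) (hk : 0 < k) :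
    IsTropicalOctahedron a k b fun t r d => tailSum a ((toggles (k - 1))^[t] L) r d := by
  let M (t : ℕ) := (toggles (k - 1))^[t] L
  have hM (t : ℕ) : IsGTPattern a b k (M t) := h.iterate_toggles (by omega) t
  have hsum (t : ℕ) {r d : ℕ} (hr : r ≤ a) (hd : d + 1 < k) :
      tailSum a (M (t + 1)) r (d + 1) + tailSum a (M t) r (d + 1) =
        min (M t (r + 1) (d + 2)) (M (t + 1) r d) + tailSum a (M (t + 1)) r d +
          tailSum a (M t) (r + 1) (d + 2) := by
    simp only [M, Function.iterate_succ_apply']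
    exact (hM t).tailSum_toggles_add (by omega) (by omega) hr
  change IsTropicalOctahedron a k b fun t r d => tailSum a (M t) r d
  constructor
  case bottom => exact fun t d => tailSum_of_le le_rfl _ _
  case lower => exact fun hd => (hM _).tailSum_eq_zero (mod_cast hd)
  case upper => exact fun hr hd => (hM _).tailSum_eq_sub hr (mod_cast hd)
  case total =>
    intro t d hd
    push_cast
    rw [hsum t (Nat.zero_le a) hd, (hM (t + 1)).top, min_eq_left ((hM t).le_width _ _),
      (hM t).tailSum_eq_add 0]
    ring
  case octahedron =>
    intro t r d hr hd
    have hcurrent := (hM t).tailSum_eq_add (r + 1) (d + 2)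
    have hpromoted := (hM (t + 1)).tailSum_eq_add r d
    have hstep := hsum t hr.le hd
    push_cast
    rw [hstep, hcurrent, hpromoted, min_def, min_def]
    split_ifs <;> linarith

theorem reciprocity (h : IsGTPattern a b k L) (hak : a ≤ k) {r t : ℕ} (hr : r < a) (ht : t ≤ k) :
    (toggles (k - 1))^[t] L (a - r) (k - t) = b - L (r + 1) t := by
  have hoctahedron := h.isTropicalOctahedron (by omega)
  have hrow := hoctahedron.reciprocity hak (by omega) hr.le ht
  have hnext := hoctahedron.reciprocity hak (by omega) (Nat.succ_le_of_lt hr) ht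
  have hlast := (h.iterate_toggles (show k - 1 + 1 ≤ k by omega) t).tailSum_eq_add
    (a - (r + 1)) (k - t)
  rw [show a - (r + 1) + 1 = a - r by omega] at hlast
  have hfirst := h.tailSum_eq_add r t
  push_cast [ht] at hrow hnext
  simp only [Function.iterate_zero_apply] at hrow hnext
  linarith

end IsGTPattern

variable {T : Fin a → Fin b → ℤ}

theorem HasGTPattern.iterate_pro (hT : HasGTPattern T L) (hL : IsGTPattern a b k L) (hk : 0 < k)
    (t : ℕ) : HasGTPattern ((pro a b k)^[t] T) ((toggles (k - 1))^[t] L) := by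
  induction t with
  | zero => exact hT
  | succ t ih =>
    rw [Function.iterate_succ_apply', Function.iterate_succ_apply']
    exact ih.pro (hL.iterate_toggles (by omega) t) hk

theorem IsSSYT.iterate_pro (hT : IsSSYT a b k T) (hk : 0 < k) (t : ℕ) :
    IsSSYT a b k ((pro a b k)^[t] T) :=
  (hT.hasGTPattern.iterate_pro hT.isGTPattern hk t).isSSYT
    (hT.isGTPattern.iterate_toggles (by omega) t)

theorem IsSSYT.bcount_add_bcount_pro (hT : IsSSYT a b k T) (hak : a ≤ k) (x : Fin a) (d : ℤ) :
    (bcount a b T x d : ℤ) + bcount a b ((pro a b k)^[d.toNat] T) x.rev (k - d) = b := by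
  have hk : 0 < k := x.pos.trans_le hak
  have hL := hT.isGTPattern
  have hL' := hL.iterate_toggles (show k - 1 + 1 ≤ k by omega) d.toNat
  rw [hT.hasGTPattern.bcount_eq hL,
    (hT.hasGTPattern.iterate_pro hL hk d.toNat).bcount_eq hL']
  have hrev : (x.rev : ℕ) + 1 = a - x := by rw [Fin.val_rev]; omega
  rcases lt_or_ge d 0 with hd | hd
  · rw [hL.empty _ hd.le, hL'.full x.rev.isLt (by omega)]
    ring
  rcases le_or_gt d k with hdk | hdk
  · lift d to ℕ using hd
    have := hL.reciprocity hak x.isLt (Nat.cast_le.1 hdk)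
    rw [hrev, Int.toNat_natCast, this]
    ring
  · rw [hL.full x.isLt hdk.le, hL'.empty _ (by omega)]
    ring

end Promotion

theorem birkhoffSum_iterate_of_isPeriodicPt {α M : Type*} [AddCommGroup M] {f : α → α} {n : ℕ}
    {x : α} (h : Function.IsPeriodicPt f n x) (g : α → M) (m : ℕ) :
    birkhoffSum f g n (f^[m] x) = birkhoffSum f g n x := by
  have hcomm := birkhoffSum_add f g m n x
  rw [add_comm m n, birkhoffSum_add, h.eq, add_comm] at hcomm
  exact (add_left_cancel hcomm).symm

/-- for positive `a, b, k` with `k ≥ a`, a row `x`, and `d ∈ ℤ`, the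
statistic `T ↦ #B(T,x,d) + #B(T,a+1−x,k−d)` is `b`-mesic on `SSYT_k(a × b)` under
promotion: for every promotion orbit (of size the minimal period `n` of any of its
elements), the average of the statistic over the orbit equals `b`. -/
theorem ssyt_bcount_homomesy (a b k : ℕ) (ha : 0 < a) (hb : 0 < b) (hak : a ≤ k)
    (x : Fin a) (d : ℤ)
    (T : Fin a → Fin b → ℤ) (hT : IsSSYT a b k T)
    (n : ℕ) (hn : 0 < n)
    (hper : (pro a b k)^[n] T = T)
    (hmin : ∀ m : ℕ, 0 < m → m < n → (pro a b k)^[m] T ≠ T) :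
    ∑ i ∈ Finset.range n,
        ((bcount a b ((pro a b k)^[i] T) x d : ℤ) +
          (bcount a b ((pro a b k)^[i] T) x.rev ((k : ℤ) - d) : ℤ)) = (b : ℤ) * n := by
  have hk : 0 < k := ha.trans_le hak
  let g (S : Fin a → Fin b → ℤ) : ℤ := bcount a b S x.rev (k - d)
  have hreciprocity (i : ℕ) :
      (bcount a b ((pro a b k)^[i] T) x d : ℤ) +
        g ((pro a b k)^[i] ((pro a b k)^[d.toNat] T)) = b := by
    rw [← Function.iterate_add_apply, add_comm i, Function.iterate_add_apply]
    exact (hT.iterate_pro hk i).bcount_add_bcount_pro hak x d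
  calc ∑ i ∈ Finset.range n,
        ((bcount a b ((pro a b k)^[i] T) x d : ℤ) + g ((pro a b k)^[i] T))
    _ = ∑ i ∈ Finset.range n, (bcount a b ((pro a b k)^[i] T) x d : ℤ) +
          birkhoffSum (pro a b k) g n T := Finset.sum_add_distrib
    _ = ∑ i ∈ Finset.range n, (bcount a b ((pro a b k)^[i] T) x d : ℤ) +
          birkhoffSum (pro a b k) g n ((pro a b k)^[d.toNat] T) := by
        rw [birkhoffSum_iterate_of_isPeriodicPt hper]
    _ = ∑ _i ∈ Finset.range n, (b : ℤ) := by
        rw [birkhoffSum, ← Finset.sum_add_distrib]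
        exact Finset.sum_congr rfl fun i _ => hreciprocity i
    _ = b * n := by rw [Finset.sum_const, Finset.card_range, nsmul_eq_mul, mul_comm]
end

section
/- Let (x₁,y₁,z₁) and (x₂,y₂,z₂) = (a+1−x₁, b+1−y₁, ℓ+1−z₁) be antipodal elements of [a] × [b] × [ℓ], and let f be a P-strict labeling in L_{([a]×[b])×[ℓ]}(R^{a+b}). Then the multiset Dist(f,(x₂,y₂,z₂)) = {Pro^i(f)(x₂,y₂,z₂) : 0 ≤ i ≤ a+b−1} equals {a+b+1−m : m ∈ Dist(f,(x₁,y₁,z₁))}. -/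
open scoped Classical

/-- `f ∈ L_{P×[ℓ]}(R^q)`: a `P`-strict labeling of `P × [ℓ]` with labels globally bounded
between `1` and `q`: strictly increasing on each layer (copy of `P`), weakly increasing
along each fiber (copy of `[ℓ]`), with labels in `{1,…,q}`. -/
def IsPStrict (P : Type*) [PartialOrder P] (ℓ q : ℕ) (f : P × Fin ℓ → ℤ) : Prop :=
  (∀ (p p' : P) (i : Fin ℓ), p < p' → f (p, i) < f (p', i)) ∧
  (∀ (p : P) (i i' : Fin ℓ), i ≤ i' → f (p, i) ≤ f (p, i')) ∧
  (∀ p i, 1 ≤ f (p, i) ∧ f (p, i) ≤ (q : ℤ))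

/-- A label `f(p,i)` is raisable if some `g ∈ L_{P×[ℓ]}(R^q)` has `g(p,i) > f(p,i)` and
agrees with `f` off the fiber of `p`. -/
def Raisable (P : Type*) [PartialOrder P] (ℓ q : ℕ) (f : P × Fin ℓ → ℤ)
    (p : P) (i : Fin ℓ) : Prop :=
  ∃ g, IsPStrict P ℓ q g ∧ f (p, i) < g (p, i) ∧
    ∀ (p' : P) (i' : Fin ℓ), p' ≠ p → g (p', i') = f (p', i')

/-- A label `f(p,i)` is lowerable if some `g ∈ L_{P×[ℓ]}(R^q)` has `g(p,i) < f(p,i)` and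
agrees with `f` off the fiber of `p`. -/
def Lowerable (P : Type*) [PartialOrder P] (ℓ q : ℕ) (f : P × Fin ℓ → ℤ)
    (p : P) (i : Fin ℓ) : Prop :=
  ∃ g, IsPStrict P ℓ q g ∧ g (p, i) < f (p, i) ∧
    ∀ (p' : P) (i' : Fin ℓ), p' ≠ p → g (p', i') = f (p', i')

/-- The `k`-th Bender–Knuth involution `ρ_k` on `P`-strict labelings with the global
restriction function `R^q` (for which the next allowed label above `k` is `k+1`): in
each fiber, the free labels (`a` raisable `k`'s followed by `b` lowerable `(k+1)`'s)
are replaced by `b` `k`'s followed by `a` `(k+1)`'s: a free position gets the label `k`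
precisely when its rank among the free positions of its fiber is at most the number of
free `(k+1)`'s. -/
noncomputable def bkP (P : Type*) [PartialOrder P] (ℓ q : ℕ) (k : ℤ)
    (f : P × Fin ℓ → ℤ) : P × Fin ℓ → ℤ :=
  fun pi =>
    let p := pi.1
    let freeK : Fin ℓ → Prop := fun z => f (p, z) = k ∧ Raisable P ℓ q f p z
    let freeK1 : Fin ℓ → Prop := fun z => f (p, z) = k + 1 ∧ Lowerable P ℓ q f p z
    if freeK pi.2 ∨ freeK1 pi.2 then
      if (Finset.univ.filter (fun z : Fin ℓ => (freeK z ∨ freeK1 z) ∧ z ≤ pi.2)).card ≤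
          (Finset.univ.filter (fun z : Fin ℓ => freeK1 z)).card
      then k else k + 1
    else f pi

/-- `P`-strict promotion `Pro = ρ_{q−1} ∘ ⋯ ∘ ρ_2 ∘ ρ_1` (so `ρ_1` is applied first). -/
noncomputable def proP (P : Type*) [PartialOrder P] (ℓ q : ℕ)
    (f : P × Fin ℓ → ℤ) : P × Fin ℓ → ℤ :=
  (List.range (q - 1)).foldl (fun g i => bkP P ℓ q ((i : ℤ) + 1) g) f

/-- `Dist(f,p) = {Pro^i(f)(p) : 0 ≤ i ≤ a+b−1}` for a `P`-strict labeling `f` of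
`([a]×[b])×[ℓ]` with restriction `R^{a+b}` and `p ∈ [a]×[b]×[ℓ]`. -/
noncomputable def DistP (a b ℓ : ℕ) (f : (Fin a × Fin b) × Fin ℓ → ℤ)
    (p : (Fin a × Fin b) × Fin ℓ) : Multiset ℤ :=
  (Multiset.range (a + b)).map (fun i => (proP (Fin a × Fin b) ℓ (a + b))^[i] f p)

/-!
A `P`-strict labeling takes only two values at each point of the rectangle, so it is encoded by the
reverse plane partition counting the larger labels in each fiber. Bender–Knuth involutions then
toggle all entries of one rank piecewise linearly. This is the tropicalization of birational
promotion: start from the labels `T ^ c i j` and read off leading exponents as `T → ∞`. So it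
suffices to show that, along an orbit of birational promotion, the labels at `(i, j)` at time `t`
and at its antipode at time `t + i + j - 1` multiply to the label `B` of the top element.

A label is a weighted sum over paths from the bottom element, and its reciprocal is one over paths
to the top element; promotion exchanges the two systems of weights. Summing a closed discrete
one-form around the rectangle compares path sums of the two kinds, which gives reciprocity for
`j = 1`, and the toggle recurrence propagates it to all `j`. Reciprocity applied twice shows that
promotion has period `a + b`, so the time shift between antipodes does not affect the multiset.
-/

namespace RectanglePromotion

section DiscreteGreen

variable {M : Type*} [AddCommMonoid M]

theorem add_sum_range_eq_sum_range_add {p q s : ℕ → M} {n : ℕ}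
    (h : ∀ j < n, p j + q j = s j + p (j + 1)) :
    p 0 + ∑ j ∈ Finset.range n, q j = ∑ j ∈ Finset.range n, s j + p n := by
  induction n with
  | zero => simp
  | succ n ih =>
    rw [Finset.sum_range_succ, Finset.sum_range_succ, ← add_assoc,
      ih fun j hj => h j (hj.trans n.lt_succ_self), add_assoc, h n n.lt_succ_self, add_assoc]

theorem sum_bottom_add_sum_right_eq_sum_left_add_sum_top {α β : ℕ → ℕ → M} {m n : ℕ}
    (h : ∀ i < m, ∀ j < n, α i j + β (i + 1) j = β i j + α i (j + 1)) :
    ∑ i ∈ Finset.range m, α i 0 + ∑ j ∈ Finset.range n, β m j =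
      ∑ j ∈ Finset.range n, β 0 j + ∑ i ∈ Finset.range m, α i n := by
  induction m with
  | zero => simp
  | succ m ih =>
    rw [Finset.sum_range_succ, Finset.sum_range_succ, add_assoc,
      add_sum_range_eq_sum_range_add (h m m.lt_succ_self), ← add_assoc,
      ih fun i hi => h i (hi.trans m.lt_succ_self), add_assoc]

end DiscreteGreen

section PathSum

variable {R : Type*} [CommSemiring R]

/-- The sum, over all lattice paths from `(m, n)` to `(i, j)` with steps `(1, 0)` and `(0, 1)`,
of the product of the weights `W` of the visited points, endpoints included. Only points with
positive coordinates are visited. -/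
def pathSum (W : ℕ → ℕ → R) (m n : ℕ) : ℕ → ℕ → R
  | 0, _ => 0
  | _ + 1, 0 => 0
  | i + 1, j + 1 => W (i + 1) (j + 1) * ((if i + 1 = m ∧ j + 1 = n then 1 else 0) +
      pathSum W m n i (j + 1) + pathSum W m n (i + 1) j)
termination_by i j => i + j

variable {W W' : ℕ → ℕ → R} {m n i j : ℕ}

theorem pathSum_zero_left : pathSum W m n 0 j = 0 := by rw [pathSum]

theorem pathSum_zero_right : pathSum W m n i 0 = 0 := by cases i <;> rw [pathSum]

theorem pathSum_succ_succ : pathSum W m n (i + 1) (j + 1) =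
    W (i + 1) (j + 1) * ((if i + 1 = m ∧ j + 1 = n then 1 else 0) +
      pathSum W m n i (j + 1) + pathSum W m n (i + 1) j) := by
  rw [pathSum]

theorem pathSum_eq_zero_of_lt (h : i < m ∨ j < n) : pathSum W m n i j = 0 := by
  induction i, j using pathSum.induct with
  | case1 => exact pathSum_zero_left
  | case2 => exact pathSum_zero_right
  | case3 i j ih_left ih_right =>
    rw [pathSum_succ_succ, ih_left (by omega), ih_right (by omega), if_neg (by omega)]
    simp

theorem pathSum_congr (h : ∀ p q, 1 ≤ p → p ≤ i → 1 ≤ q → q ≤ j → W p q = W' p q) :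
    pathSum W m n i j = pathSum W' m n i j := by
  induction i, j using pathSum.induct with
  | case1 => rw [pathSum_zero_left, pathSum_zero_left]
  | case2 => rw [pathSum_zero_right, pathSum_zero_right]
  | case3 i j ih_left ih_right =>
    rw [pathSum_succ_succ, pathSum_succ_succ, h _ _ (by omega) le_rfl (by omega) le_rfl,
      ih_left fun p q hp hpi hq hqj => h p q hp (by omega) hq hqj,
      ih_right fun p q hp hpi hq hqj => h p q hp hpi hq (by omega)]

theorem pathSum_eq_source_mul (hm : 1 ≤ m) (hn : 1 ≤ n) :
    pathSum W m n i j = W m n * ((if i = m ∧ j = n then 1 else 0) +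
      pathSum W (m + 1) n i j + pathSum W m (n + 1) i j) := by
  induction i, j using pathSum.induct with
  | case1 j =>
    rw [if_neg (by omega)]
    simp only [pathSum_zero_left, add_zero, mul_zero]
  | case2 i =>
    rw [if_neg (by omega)]
    simp only [pathSum_zero_right, add_zero, mul_zero]
  | case3 i j ih_left ih_right =>
    rw [pathSum_succ_succ, pathSum_succ_succ, pathSum_succ_succ, ih_left, ih_right]
    by_cases h : i + 1 = m ∧ j + 1 = n
    · obtain ⟨rfl, rfl⟩ := h
      simp [pathSum_eq_zero_of_lt]
    · simp only [h, Nat.add_right_cancel_iff, if_false]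
      ring

end PathSum

/-- `(i, j)` is an element of the rectangle `[a] × [b]`, with coordinates starting at `1`. -/
def InRect (a b i j : ℕ) : Prop := (1 ≤ i ∧ i ≤ a) ∧ 1 ≤ j ∧ j ≤ b

section Birational

variable {𝕜 : Type*} [Field 𝕜]

/-- The sum of the labels at the lower covers of `(i, j)`, for `1 ≤ i` and `1 ≤ j`. -/
def lowerSum (x : ℕ → ℕ → 𝕜) (i j : ℕ) : 𝕜 := x (i - 1) j + x i (j - 1)

/-- The sum of the reciprocals of the labels at the upper covers of `(i, j)`. -/
def upperInvSum (x : ℕ → ℕ → 𝕜) (i j : ℕ) : 𝕜 := (x (i + 1) j)⁻¹ + (x i (j + 1))⁻¹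

/-- The weight of `(i, j)` for which labels are sums over paths from the bottom element. -/
def downWeight (x : ℕ → ℕ → 𝕜) (i j : ℕ) : 𝕜 := x i j / lowerSum x i j

/-- The weight of `(i, j)` for which reciprocals of labels are sums over paths to the top
element. -/
def upWeight (x : ℕ → ℕ → 𝕜) (i j : ℕ) : 𝕜 := (x i j * upperInvSum x i j)⁻¹

/-- The sum over paths from `(m, 1)` to `(i, j)` weighted by `downWeight`, relative to the label
at `(i, j)`; it is a weighted average of its values at the lower covers. -/
def sourcePotential (x : ℕ → ℕ → 𝕜) (m i j : ℕ) : 𝕜 :=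
  pathSum (downWeight x) m 1 i j / x i j

/-- The sum over paths from `(i, j)` to `(k, b)` weighted by `upWeight`, scaled by the label
at `(i, j)`; it is a weighted average of its values at the upper covers. -/
def sinkPotential (x : ℕ → ℕ → 𝕜) (k b i j : ℕ) : 𝕜 :=
  x i j * pathSum (upWeight x) i j k b

/-- The one-form `h dg` on the edges of a unit square is closed when `h` at the top corner and `g`
at the bottom corner are averages of their values at the side corners, with opposite weights. -/
theorem add_eq_add_of_opposite_averages {s t h₁₀ h₀₁ h₁₁ g₀₀ g₁₀ g₀₁ g₁₁ : 𝕜} (hst : s + t ≠ 0)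
    (hh : h₁₁ * (s + t) = s * h₀₁ + t * h₁₀) (hg : g₀₀ * (s + t) = t * g₀₁ + s * g₁₀) :
    h₁₀ * (g₁₀ - g₀₀) + h₁₁ * (g₁₁ - g₁₀) = h₀₁ * (g₀₁ - g₀₀) + h₁₁ * (g₁₁ - g₀₁) := by
  refine mul_left_cancel₀ hst ?_
  linear_combination (g₀₁ - g₁₀) * hh + (h₀₁ - h₁₀) * hg

variable {a b i j k m : ℕ} {B : 𝕜} {x : ℕ → ℕ → 𝕜}

theorem sourcePotential_eq_zero (h : i < m) : sourcePotential x m i j = 0 := by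
  rw [sourcePotential, pathSum_eq_zero_of_lt (Or.inl h), zero_div]

theorem sinkPotential_eq_zero (h : k < i) : sinkPotential x k b i j = 0 := by
  rw [sinkPotential, pathSum_eq_zero_of_lt (Or.inl h), mul_zero]

variable [LinearOrder 𝕜]

/-- A positive labeling of `[a] × [b]` with a bottom element labeled `1` and a top element labeled
`B` adjoined. These sit at `(0, 1)` and `(a + 1, b)`; every other point outside the rectangle is
labeled `0`, and `0⁻¹ = 0`, so `lowerSum` and `upperInvSum` need no special cases at the border. -/
structure IsLabeling (a b : ℕ) (B : 𝕜) (x : ℕ → ℕ → 𝕜) : Prop where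
  pos : ∀ {i j}, InRect a b i j → 0 < x i j
  top_pos : 0 < B
  bot : x 0 1 = 1
  top : x (a + 1) b = B
  eq_zero : ∀ {i j}, ¬ InRect a b i j → ¬ (i = 0 ∧ j = 1) → ¬ (i = a + 1 ∧ j = b) → x i j = 0

namespace IsLabeling

theorem sourcePotential_bottom (hx : IsLabeling a b B x) (hm : 1 ≤ m) (hmi : m < i)
    (hia : i ≤ a) (hb : 1 ≤ b) : sourcePotential x (m + 1) i 1 = (x m 1)⁻¹ := by
  induction i, hmi using Nat.le_induction with
  | base =>
    have hpos : 0 < x (m + 1) 1 := hx.pos ⟨by omega, by omega⟩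
    rw [sourcePotential, pathSum_succ_succ (j := 0), pathSum_eq_zero_of_lt (by omega),
      pathSum_zero_right, downWeight, lowerSum,
      hx.eq_zero (i := m + 1) (j := 0 + 1 - 1) (by unfold InRect; omega) (by omega) (by omega)]
    simp only [zero_add, Nat.add_sub_cancel, and_self, if_true, add_zero, mul_one]
    field_simp
  | succ i hmi ih =>
    have hpos : 0 < x i 1 := hx.pos ⟨by omega, by omega⟩
    have hpos' : 0 < x (i + 1) 1 := hx.pos ⟨by omega, by omega⟩
    rw [← ih (by omega), sourcePotential, pathSum_succ_succ (j := 0), if_neg (by omega),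
      pathSum_zero_right, downWeight, lowerSum,
      hx.eq_zero (i := i + 1) (j := 0 + 1 - 1) (by unfold InRect; omega) (by omega) (by omega)]
    simp only [sourcePotential, zero_add, Nat.add_sub_cancel, add_zero]
    field_simp

theorem sinkPotential_top (hx : IsLabeling a b B x) (hi : 1 ≤ i) (hik : i ≤ k)
    (hka : k < a) (hb : 1 ≤ b) : sinkPotential x k b i b = x (k + 1) b := by
  have upWeight_top {i : ℕ} (hi : 1 ≤ i) (hia : i < a) : x i b * upWeight x i b = x (i + 1) b := by
    have hpos : 0 < x i b := hx.pos ⟨by omega, by omega⟩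
    rw [upWeight, upperInvSum, hx.eq_zero (i := i) (j := b + 1) (by unfold InRect; omega)
      (by omega) (by omega)]
    field_simp
    simp
  induction hik using Nat.decreasingInduction with
  | self =>
    rw [sinkPotential, pathSum_eq_source_mul hi hb, if_pos ⟨rfl, rfl⟩,
      pathSum_eq_zero_of_lt (by omega), pathSum_eq_zero_of_lt (by omega), add_zero, add_zero,
      mul_one, upWeight_top hi hka]
  | of_succ i hik ih =>
    rw [sinkPotential, pathSum_eq_source_mul hi hb, if_neg (by omega),
      pathSum_eq_zero_of_lt (n := b + 1) (by omega), zero_add, add_zero, ← mul_assoc,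
      upWeight_top hi (by omega)]
    exact ih (by omega)

theorem sum_sourcePotential_mul_sub_bottom (hx : IsLabeling (a + 1) b B x) (hb : 1 ≤ b)
    (hma : m < a) (g : ℕ → 𝕜) :
    ∑ i ∈ Finset.range a, sourcePotential x (m + 2) (i + 2) 1 * (g (i + 2) - g (i + 1)) =
      (x (m + 1) 1)⁻¹ * (g (a + 1) - g (m + 1)) := by
  rw [Finset.range_eq_Ico, ← Finset.sum_Ico_consecutive _ m.zero_le hma.le]
  have left : ∑ i ∈ Finset.Ico 0 m,
      sourcePotential x (m + 2) (i + 2) 1 * (g (i + 2) - g (i + 1)) = 0 := by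
    refine Finset.sum_eq_zero fun i hi => ?_
    rw [sourcePotential_eq_zero (by have := Finset.mem_Ico.1 hi; omega), zero_mul]
  have right : ∀ i ∈ Finset.Ico m a,
      sourcePotential x (m + 2) (i + 2) 1 * (g (i + 2) - g (i + 1)) =
        (x (m + 1) 1)⁻¹ * (g (i + 1 + 1) - g (i + 1)) := by
    intro i hi
    have := Finset.mem_Ico.1 hi
    rw [hx.sourcePotential_bottom (m := m + 1) (by omega) (by omega) (by omega) hb]
  rw [left, zero_add, Finset.sum_congr rfl right, ← Finset.mul_sum,
    Finset.sum_Ico_sub (fun i => g (i + 1)) hma.le]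

theorem sum_mul_sinkPotential_sub_top (hx : IsLabeling (a + 1) b B x) (hb : 1 ≤ b)
    (hka : k < a) (h : ℕ → 𝕜) :
    ∑ i ∈ Finset.range a,
        h (i + 2) * (sinkPotential x (k + 1) b (i + 2) b - sinkPotential x (k + 1) b (i + 1) b) =
      -(h (k + 2) * x (k + 2) b) := by
  rw [Finset.sum_eq_single_of_mem k (Finset.mem_range.2 hka)]
  · rw [sinkPotential_eq_zero (by omega),
      hx.sinkPotential_top (by omega) le_rfl (by omega) hb]
    ring
  · intro i _ hik
    rcases hik.lt_or_gt with hik | hik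
    · rw [hx.sinkPotential_top (by omega) (by omega) (by omega) hb,
        hx.sinkPotential_top (by omega) (by omega) (by omega) hb, sub_self, mul_zero]
    · rw [sinkPotential_eq_zero (by omega), sinkPotential_eq_zero (by omega), sub_self, mul_zero]

end IsLabeling

variable [IsStrictOrderedRing 𝕜]

theorem lowerSum_pos_of_forall_lt (hij : InRect a b i j) (hbot : 0 < x 0 1)
    (h : ∀ p q, p + q < i + j → 0 ≤ x p q ∧ (InRect a b p q → 0 < x p q)) :
    0 < lowerSum x i j := by
  obtain ⟨⟨hi, hia⟩, hj, hjb⟩ := hij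
  by_cases hj1 : j = 1
  · refine add_pos_of_pos_of_nonneg ?_ (h _ _ (by omega)).1
    rcases hi.eq_or_lt with rfl | hi
    · simpa [hj1] using hbot
    · exact (h _ _ (by omega)).2 ⟨by omega, by omega⟩
  · exact add_pos_of_nonneg_of_pos (h _ _ (by omega)).1
      ((h _ _ (by omega)).2 ⟨by omega, by omega⟩)

namespace IsLabeling

theorem nonneg (hx : IsLabeling a b B x) (i j : ℕ) : 0 ≤ x i j := by
  by_cases hij : InRect a b i j
  · exact (hx.pos hij).le
  by_cases hbot : i = 0 ∧ j = 1
  · rw [hbot.1, hbot.2, hx.bot]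
    exact zero_le_one
  by_cases htop : i = a + 1 ∧ j = b
  · rw [htop.1, htop.2, hx.top]
    exact hx.top_pos.le
  · exact (hx.eq_zero hij hbot htop).ge

theorem lowerSum_pos (hx : IsLabeling a b B x) (hij : InRect a b i j) : 0 < lowerSum x i j :=
  lowerSum_pos_of_forall_lt hij (hx.bot ▸ zero_lt_one) fun _ _ _ => ⟨hx.nonneg _ _, hx.pos⟩

theorem upperInvSum_pos (hx : IsLabeling a b B x) (hij : InRect a b i j) :
    0 < upperInvSum x i j := by
  obtain ⟨⟨hi, hia⟩, hj, hjb⟩ := hij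
  by_cases hj1 : j = b
  · refine add_pos_of_pos_of_nonneg (inv_pos.2 ?_) (inv_nonneg.2 (hx.nonneg _ _))
    rcases hia.eq_or_lt with rfl | hia
    · rw [hj1, hx.top]
      exact hx.top_pos
    · exact hx.pos ⟨by omega, by omega⟩
  · exact add_pos_of_nonneg_of_pos (inv_nonneg.2 (hx.nonneg _ _))
      (inv_pos.2 (hx.pos ⟨by omega, by omega⟩))

theorem eq_pathSum_downWeight (hx : IsLabeling a b B x) (hij : InRect a b i j) :
    x i j = pathSum (downWeight x) 1 1 i j := by
  induction i, j using pathSum.induct with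
  | case1 => exact absurd hij.1.1 (by omega)
  | case2 => exact absurd hij.2.1 (by omega)
  | case3 i j ih_left ih_right =>
    have hpos := hx.lowerSum_pos hij
    obtain ⟨⟨hi, hia⟩, hj, hjb⟩ := hij
    have left : (if i + 1 = 1 ∧ j + 1 = 1 then 1 else 0) + pathSum (downWeight x) 1 1 i (j + 1) =
        x i (j + 1) := by
      rcases i.eq_zero_or_pos with rfl | hi0
      · rw [pathSum_zero_left]
        by_cases hj0 : j = 0
        · simp [hj0, hx.bot]
        · rw [if_neg (by omega), add_zero, hx.eq_zero (by unfold InRect; omega) (by omega)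
            (by omega)]
      · rw [if_neg (by omega), zero_add, ih_left ⟨by omega, by omega⟩]
    have right : pathSum (downWeight x) 1 1 (i + 1) j = x (i + 1) j := by
      rcases j.eq_zero_or_pos with rfl | hj0
      · rw [pathSum_zero_right, hx.eq_zero (by unfold InRect; omega) (by omega) (by omega)]
      · exact (ih_right ⟨by omega, by omega⟩).symm
    rw [pathSum_succ_succ, left, right]
    exact (div_mul_cancel₀ _ hpos.ne').symm

theorem inv_eq_pathSum_upWeight (hx : IsLabeling a b B x) (hij : InRect a b i j) :
    (x i j)⁻¹ = B⁻¹ * pathSum (upWeight x) i j a b := by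
  induction hd : a + b - i - j using Nat.strong_induction_on generalizing i j with
  | _ d ih =>
  have hx_pos := hx.pos hij
  have hpos := hx.upperInvSum_pos hij
  obtain ⟨⟨hi, hia⟩, hj, hjb⟩ := hij
  have right : (x (i + 1) j)⁻¹ = B⁻¹ * ((if a = i ∧ b = j then 1 else 0) +
      pathSum (upWeight x) (i + 1) j a b) := by
    rcases hia.eq_or_lt with rfl | hia
    · rw [pathSum_eq_zero_of_lt (by omega), add_zero]
      by_cases hjb' : b = j
      · simp [← hjb', hx.top]
      · rw [if_neg (by omega), hx.eq_zero (by unfold InRect; omega) (by omega) (by omega)]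
        simp
    · rw [if_neg (by omega), zero_add, ih _ (by omega) ⟨by omega, by omega⟩ rfl]
  have up : (x i (j + 1))⁻¹ = B⁻¹ * pathSum (upWeight x) i (j + 1) a b := by
    rcases hjb.eq_or_lt with rfl | hjb
    · rw [pathSum_eq_zero_of_lt (by omega),
        hx.eq_zero (by unfold InRect; omega) (by omega) (by omega)]
      simp
    · exact ih _ (by omega) ⟨by omega, by omega⟩ rfl
  calc (x i j)⁻¹ = upWeight x i j * upperInvSum x i j := by
        unfold upWeight
        field_simp
    _ = B⁻¹ * pathSum (upWeight x) i j a b := by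
        rw [pathSum_eq_source_mul hi hj, upperInvSum, right, up]
        ring

theorem sourcePotential_succ_succ_mul (hx : IsLabeling a b B x) (hi : 1 ≤ i) (hia : i < a)
    (hj : 1 ≤ j) (hjb : j < b) :
    sourcePotential x m (i + 1) (j + 1) * (x i (j + 1) + x (i + 1) j) =
      x i (j + 1) * sourcePotential x m i (j + 1) +
        x (i + 1) j * sourcePotential x m (i + 1) j := by
  have h₀₁ : 0 < x i (j + 1) := hx.pos ⟨by omega, by omega⟩
  have h₁₀ : 0 < x (i + 1) j := hx.pos ⟨by omega, by omega⟩
  have h₁₁ : 0 < x (i + 1) (j + 1) := hx.pos ⟨by omega, by omega⟩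
  simp only [sourcePotential, pathSum_succ_succ, downWeight, lowerSum, Nat.add_sub_cancel]
  rw [if_neg (by omega)]
  field_simp
  ring

theorem sinkPotential_mul (hx : IsLabeling a b B x) (hi : 1 ≤ i) (hia : i < a)
    (hj : 1 ≤ j) (hjb : j < b) :
    sinkPotential x k b i j * (x i (j + 1) + x (i + 1) j) =
      x (i + 1) j * sinkPotential x k b i (j + 1) +
        x i (j + 1) * sinkPotential x k b (i + 1) j := by
  have h₀₀ : 0 < x i j := hx.pos ⟨by omega, by omega⟩
  have h₀₁ : 0 < x i (j + 1) := hx.pos ⟨by omega, by omega⟩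
  have h₁₀ : 0 < x (i + 1) j := hx.pos ⟨by omega, by omega⟩
  simp only [sinkPotential, pathSum_eq_source_mul (m := i) hi hj, upWeight, upperInvSum]
  rw [if_neg (by omega)]
  field_simp
  ring

theorem sourcePotential_mul_sinkPotential_sub_add (hx : IsLabeling a b B x) (hi : 1 ≤ i)
    (hia : i < a) (hj : 1 ≤ j) (hjb : j < b) :
    sourcePotential x m (i + 1) j * (sinkPotential x k b (i + 1) j - sinkPotential x k b i j) +
        sourcePotential x m (i + 1) (j + 1) *
          (sinkPotential x k b (i + 1) (j + 1) - sinkPotential x k b (i + 1) j) =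
      sourcePotential x m i (j + 1) * (sinkPotential x k b i (j + 1) - sinkPotential x k b i j) +
        sourcePotential x m (i + 1) (j + 1) *
          (sinkPotential x k b (i + 1) (j + 1) - sinkPotential x k b i (j + 1)) := by
  have hpos : 0 < x i (j + 1) := hx.pos ⟨by omega, by omega⟩
  have hpos' : 0 < x (i + 1) j := hx.pos ⟨by omega, by omega⟩
  exact add_eq_add_of_opposite_averages (add_pos hpos hpos').ne'
    (hx.sourcePotential_succ_succ_mul hi hia hj hjb) (hx.sinkPotential_mul hi hia hj hjb)

/-- Sum the closed one-form `sourcePotential d(sinkPotential)` around the rectangle: it vanishes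
on the left and right sides and telescopes on the bottom and top ones. -/
theorem pathSum_downWeight_eq_pathSum_upWeight (hx : IsLabeling (a + 1) (b + 1) B x)
    (hma : m < a) (hka : k < a) :
    pathSum (downWeight x) (m + 2) 1 (k + 2) (b + 1) =
      pathSum (upWeight x) (m + 1) 1 (k + 1) (b + 1) := by
  set h := sourcePotential x (m + 2) with h_def
  set g := sinkPotential x (k + 1) (b + 1) with g_def
  have left (j : ℕ) : h 1 j = 0 := sourcePotential_eq_zero (by omega)
  have right (j : ℕ) : g (a + 1) j = 0 := sinkPotential_eq_zero (by omega)
  have bottom := hx.sum_sourcePotential_mul_sub_bottom (by omega) hma fun i => g i 1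
  have top := hx.sum_mul_sinkPotential_sub_top (by omega) hka fun i => h i (b + 1)
  have green := sum_bottom_add_sum_right_eq_sum_left_add_sum_top (m := a) (n := b)
    (α := fun i j => h (i + 2) (j + 1) * (g (i + 2) (j + 1) - g (i + 1) (j + 1)))
    (β := fun i j => h (i + 1) (j + 2) * (g (i + 1) (j + 2) - g (i + 1) (j + 1)))
    fun i hi j hj => hx.sourcePotential_mul_sinkPotential_sub_add (by omega) (by omega)
      (by omega) (by omega)
  simp only [left, right, sub_self, zero_sub, zero_mul, mul_zero, mul_neg, zero_add, add_zero,
    Finset.sum_const_zero] at bottom top green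
  have hm_pos : 0 < x (m + 1) 1 := hx.pos ⟨by omega, by omega⟩
  have hk_pos : 0 < x (k + 2) (b + 1) := hx.pos ⟨by omega, by omega⟩
  have corner := bottom.symm.trans (green.trans top)
  rw [neg_inj, h_def, g_def, sinkPotential, sourcePotential, inv_mul_cancel_left₀ hm_pos.ne',
    div_mul_cancel₀ _ hk_pos.ne'] at corner
  exact corner.symm

end IsLabeling

end Birational

section PromotionOrbit

variable {𝕜 : Type*} [Field 𝕜] [LinearOrder 𝕜] {a b i j k m : ℕ} {B : 𝕜} {x y : ℕ → ℕ → 𝕜}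

theorem IsLabeling.eq_mul_inv_of_not_inRect {i' j' : ℕ} (hx : IsLabeling a b B x)
    (hy : IsLabeling a b B y) (hi : i + i' = a + 1) (hj : j + j' = b + 1)
    (hij : ¬ InRect a b i j) : x i j = B * (y i' j')⁻¹ := by
  by_cases hbot : i = 0 ∧ j = 1
  · obtain ⟨rfl, rfl⟩ := hbot
    obtain ⟨rfl, rfl⟩ : i' = a + 1 ∧ j' = b := by omega
    rw [hx.bot, hy.top, mul_inv_cancel₀ hx.top_pos.ne']
  by_cases htop : i = a + 1 ∧ j = b
  · obtain ⟨rfl, rfl⟩ := htop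
    obtain ⟨rfl, rfl⟩ : i' = 0 ∧ j' = 1 := by omega
    rw [hx.top, hy.bot, inv_one, mul_one]
  · rw [hx.eq_zero hij hbot htop, hy.eq_zero (by unfold InRect at *; omega) (by omega) (by omega),
      inv_zero, mul_zero]

/-- An orbit of birational promotion on labelings of `[a] × [b]`: `G (t + 1)` is obtained from
`G t` by toggling every element once, from bottom to top. -/
structure IsPromotionOrbit (a b : ℕ) (B : 𝕜) (G : ℕ → ℕ → ℕ → 𝕜) : Prop where
  isLabeling : ∀ t, IsLabeling a b B (G t)
  recurrence : ∀ t {i j}, InRect a b i j →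
    G (t + 1) i j * G t i j * upperInvSum (G t) i j = lowerSum (G (t + 1)) i j

variable {G : ℕ → ℕ → ℕ → 𝕜} {t : ℕ}

namespace IsPromotionOrbit

theorem upWeight_eq_downWeight_succ (hG : IsPromotionOrbit a b B G) (hij : InRect a b i j) :
    upWeight (G t) i j = downWeight (G (t + 1)) i j := by
  have hpos := (hG.isLabeling (t + 1)).pos hij
  rw [upWeight, downWeight, ← hG.recurrence t hij, mul_assoc, div_mul_cancel_left₀ hpos.ne']

theorem pathSum_upWeight_eq_pathSum_downWeight_succ (hG : IsPromotionOrbit a b B G) {n : ℕ}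
    (hi : i ≤ a) (hj : j ≤ b) :
    pathSum (upWeight (G t)) m n i j = pathSum (downWeight (G (t + 1))) m n i j :=
  pathSum_congr fun _ _ hp hpi hq hqj =>
    hG.upWeight_eq_downWeight_succ ⟨⟨hp, hpi.trans hi⟩, hq, hqj.trans hj⟩

variable [IsStrictOrderedRing 𝕜]

theorem pathSum_downWeight_eq_of_add_le (hG : IsPromotionOrbit (a + 1) (b + 1) B G)
    (hkm : k + m ≤ a) :
    pathSum (downWeight (G t)) (m + 1) 1 (k + m + 1) (b + 1) =
      pathSum (downWeight (G (t + m))) 1 1 (k + 1) (b + 1) := by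
  induction m generalizing t with
  | zero => rfl
  | succ m ih =>
    rw [← add_assoc, (hG.isLabeling t).pathSum_downWeight_eq_pathSum_upWeight (by omega) (by omega),
      hG.pathSum_upWeight_eq_pathSum_downWeight_succ (by omega) le_rfl, ih (by omega),
      add_right_comm, add_assoc]

theorem eq_mul_inv_of_bottom (hG : IsPromotionOrbit (a + 1) (b + 1) B G) (hkm : k + m = a) :
    G t (m + 1) 1 = B * (G (t + m + 1) (k + 1) (b + 1))⁻¹ := by
  rw [← inv_inj, (hG.isLabeling t).inv_eq_pathSum_upWeight ⟨by omega, by omega⟩,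
    hG.pathSum_upWeight_eq_pathSum_downWeight_succ le_rfl le_rfl, ← hkm,
    hG.pathSum_downWeight_eq_of_add_le hkm.le, add_right_comm,
    ← (hG.isLabeling _).eq_pathSum_downWeight ⟨by omega, by omega⟩, mul_inv, inv_inv]

end IsPromotionOrbit

/-- The labels in column `j` of an orbit are `B` divided by the labels at the antipodes at the
appropriate later times. The bottom and top elements, as well as the junk zeros around the
rectangle, are included. -/
def ReciprocalAt (a b : ℕ) (B : 𝕜) (G : ℕ → ℕ → ℕ → 𝕜) (j : ℕ) : Prop :=
  ∀ ⦃t s i i' j' : ℕ⦄, i + i' = a + 1 → j + j' = b + 1 → s + 1 = t + i + j →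
    G t i j = B * (G s i' j')⁻¹

namespace IsPromotionOrbit

theorem reciprocalAt_zero (hG : IsPromotionOrbit a b B G) : ReciprocalAt a b B G 0 :=
  fun t s _ _ _ hi hj _ => (hG.isLabeling t).eq_mul_inv_of_not_inRect (hG.isLabeling s) hi hj
    (by unfold InRect; omega)

variable [IsStrictOrderedRing 𝕜]

theorem reciprocalAt_one (hG : IsPromotionOrbit a b B G) : ReciprocalAt a b B G 1 := by
  intro t s i i' j' hi hj hs
  by_cases hij : InRect a b i 1
  · obtain ⟨⟨hi1, hia⟩, _, hb⟩ := hij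
    obtain ⟨m, rfl⟩ := Nat.exists_eq_add_of_le' hi1
    obtain ⟨b, rfl⟩ := Nat.exists_eq_add_of_le' hb
    obtain ⟨a, rfl⟩ := Nat.exists_eq_add_of_le' (hi1.trans hia)
    obtain ⟨k, rfl⟩ : ∃ k, i' = k + 1 := ⟨i' - 1, by omega⟩
    obtain rfl : j' = b + 1 := by omega
    obtain rfl : s = t + m + 1 := by omega
    exact hG.eq_mul_inv_of_bottom (by omega)
  · exact (hG.isLabeling t).eq_mul_inv_of_not_inRect (hG.isLabeling s) hi hj hij

/-- The recurrences at `(i, j + 1)` and at its antipode determine the label at `(i, j + 2)` and the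
label at its antipode, respectively, from labels already known to be reciprocal. -/
theorem reciprocalAt_add_two (hG : IsPromotionOrbit a b B G) (hj₀ : ReciprocalAt a b B G j)
    (hj₁ : ReciprocalAt a b B G (j + 1)) : ReciprocalAt a b B G (j + 2) := by
  intro t s i i' j' hi hj hs
  by_cases hij : InRect a b i (j + 2)
  swap
  · exact (hG.isLabeling t).eq_mul_inv_of_not_inRect (hG.isLabeling s) hi hj hij
  obtain ⟨⟨hi1, hia⟩, _, hjb⟩ := hij
  obtain ⟨i, rfl⟩ := Nat.exists_eq_add_of_le' hi1
  obtain ⟨i', rfl⟩ : ∃ k, i' = k + 1 := ⟨i' - 1, by omega⟩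
  obtain ⟨s, rfl⟩ : ∃ r, s = r + 1 := ⟨s - 1, by omega⟩
  have hB := (hG.isLabeling t).top_pos
  have hpos := (hG.isLabeling s).pos (i := i' + 1) (j := j' + 1) ⟨by omega, by omega⟩
  have hpos' := (hG.isLabeling (s + 1)).pos (i := i' + 1) (j := j' + 1) ⟨by omega, by omega⟩
  have rec_lower := hG.recurrence t (i := i + 1) (j := j + 1) ⟨by omega, by omega⟩
  have rec_upper := hG.recurrence s (i := i' + 1) (j := j' + 1) ⟨by omega, by omega⟩
  simp only [lowerSum, upperInvSum, Nat.add_sub_cancel] at rec_lower rec_upper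
  have self : G t (i + 1) (j + 1) = B * (G s (i' + 1) (j' + 1))⁻¹ :=
    hj₁ (by omega) (by omega) (by omega)
  have self_succ : G (t + 1) (i + 1) (j + 1) = B * (G (s + 1) (i' + 1) (j' + 1))⁻¹ :=
    hj₁ (by omega) (by omega) (by omega)
  have right : G t (i + 1 + 1) (j + 1) = B * (G (s + 1) i' (j' + 1))⁻¹ :=
    hj₁ (by omega) (by omega) (by omega)
  have left : G (t + 1) i (j + 1) = B * (G s (i' + 1 + 1) (j' + 1))⁻¹ :=
    hj₁ (by omega) (by omega) (by omega)
  have down : G (t + 1) (i + 1) j = B * (G s (i' + 1) (j' + 1 + 1))⁻¹ :=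
    hj₀ (by omega) (by omega) (by omega)
  rw [self, self_succ, right, left, down, ← mul_add, mul_inv, inv_inv] at rec_lower
  rw [← inv_inj, mul_inv, inv_inv, eq_inv_mul_iff_mul_eq₀ hB.ne', ← add_right_inj, ← rec_upper]
  generalize (G s (i' + 1 + 1) (j' + 1))⁻¹ + _ = U at rec_lower ⊢
  field_simp at rec_lower ⊢
  linear_combination rec_lower

theorem reciprocalAt (hG : IsPromotionOrbit a b B G) (j : ℕ) : ReciprocalAt a b B G j := by
  induction j using Nat.twoStepInduction with
  | zero => exact hG.reciprocalAt_zero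
  | one => exact hG.reciprocalAt_one
  | more j hj₀ hj₁ => exact hG.reciprocalAt_add_two hj₀ hj₁

theorem mul_antipode_eq (hG : IsPromotionOrbit a b B G) {s i' j' : ℕ} (hij : InRect a b i j)
    (hi : i + i' = a + 1) (hj : j + j' = b + 1) (hs : s + 1 = t + i + j) :
    G t i j * G s i' j' = B := by
  have hpos : 0 < G s i' j' := (hG.isLabeling s).pos (by unfold InRect at *; omega)
  rw [hG.reciprocalAt j hi hj hs, inv_mul_cancel_right₀ hpos.ne']

end IsPromotionOrbit

end PromotionOrbit

section BirationalPromotion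

variable {𝕜 : Type*} [Field 𝕜] {a b i j : ℕ} {B : 𝕜} {x : ℕ → ℕ → 𝕜}

/-- Birational promotion: the elements of `[a] × [b]` are toggled one after the other from bottom
to top, so that the new label of `(i, j)` involves the new labels of its lower covers and the old
ones of its upper covers. -/
noncomputable def birationalPromotion (a b : ℕ) (x : ℕ → ℕ → 𝕜) (i j : ℕ) : 𝕜 :=
  if _ : InRect a b i j then
    (birationalPromotion a b x (i - 1) j + birationalPromotion a b x i (j - 1)) /
      (x i j * upperInvSum x i j)
  else x i j
termination_by i + j
decreasing_by all_goals grind [InRect]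

theorem birationalPromotion_of_inRect (hij : InRect a b i j) :
    birationalPromotion a b x i j =
      lowerSum (birationalPromotion a b x) i j / (x i j * upperInvSum x i j) := by
  rw [birationalPromotion, dif_pos hij, lowerSum]

theorem birationalPromotion_of_not_inRect (hij : ¬ InRect a b i j) :
    birationalPromotion a b x i j = x i j := by
  rw [birationalPromotion, dif_neg hij]

variable [LinearOrder 𝕜] [IsStrictOrderedRing 𝕜]

namespace IsLabeling

theorem birationalPromotion_nonneg_and_pos (hx : IsLabeling a b B x) (i j : ℕ) :
    0 ≤ birationalPromotion a b x i j ∧ (InRect a b i j → 0 < birationalPromotion a b x i j) := by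
  induction hn : i + j using Nat.strong_induction_on generalizing i j with
  | _ n ih =>
  by_cases hij : InRect a b i j
  · suffices hpos : 0 < birationalPromotion a b x i j from ⟨hpos.le, fun _ => hpos⟩
    have hbot : 0 < birationalPromotion a b x 0 1 := by
      rw [birationalPromotion_of_not_inRect (by unfold InRect; omega), hx.bot]
      exact zero_lt_one
    rw [birationalPromotion_of_inRect hij]
    exact div_pos (lowerSum_pos_of_forall_lt hij hbot fun p q hpq => ih _ (hn ▸ hpq) p q rfl)
      (mul_pos (hx.pos hij) (hx.upperInvSum_pos hij))
  · rw [birationalPromotion_of_not_inRect hij]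
    exact ⟨hx.nonneg i j, fun h => absurd h hij⟩

theorem isLabeling_birationalPromotion (hx : IsLabeling a b B x) :
    IsLabeling a b B (birationalPromotion a b x) where
  pos {i j} hij := (hx.birationalPromotion_nonneg_and_pos i j).2 hij
  top_pos := hx.top_pos
  bot := by rw [birationalPromotion_of_not_inRect (by unfold InRect; omega), hx.bot]
  top := by rw [birationalPromotion_of_not_inRect (by unfold InRect; omega), hx.top]
  eq_zero hij hbot htop := by
    rw [birationalPromotion_of_not_inRect hij, hx.eq_zero hij hbot htop]

theorem isPromotionOrbit_iterate (hx : IsLabeling a b B x) :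
    IsPromotionOrbit a b B fun t => (birationalPromotion a b)^[t] x := by
  have labeling (t : ℕ) : IsLabeling a b B ((birationalPromotion a b)^[t] x) := by
    induction t with
    | zero => exact hx
    | succ t ih =>
      rw [Function.iterate_succ_apply']
      exact ih.isLabeling_birationalPromotion
  refine ⟨labeling, fun t i j hij => ?_⟩
  have hpos := (labeling t).pos hij
  have hpos' := (labeling t).upperInvSum_pos hij
  simp only [Function.iterate_succ_apply']
  rw [mul_assoc, birationalPromotion_of_inRect hij]
  exact div_mul_cancel₀ _ (mul_pos hpos hpos').ne'

end IsLabeling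

end BirationalPromotion

section Degree

open Filter Asymptotics Topology

/-- `g` is eventually positive and grows like `T ^ c` as `T → ∞`. -/
def HasDegree (g : ℝ → ℝ) (c : ℤ) : Prop :=
  (∀ᶠ T in atTop, 0 < g T) ∧ g =Θ[atTop] fun T => T ^ c

theorem isLittleO_zpow_of_lt {c d : ℤ} (hcd : c < d) :
    (fun T : ℝ => T ^ c) =o[atTop] fun T => T ^ d := by
  refine (isLittleO_iff_tendsto' ?_).2 ?_
  · filter_upwards [eventually_ne_atTop 0] with T hT h using absurd h (zpow_ne_zero d hT)
  · refine (tendsto_zpow_atTop_zero (sub_neg.2 hcd)).congr' ?_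
    filter_upwards [eventually_ne_atTop 0] with T hT using zpow_sub₀ hT c d

theorem isBigO_zpow_of_le {c d : ℤ} (hcd : c ≤ d) :
    (fun T : ℝ => T ^ c) =O[atTop] fun T => T ^ d := by
  rcases hcd.eq_or_lt with rfl | hcd
  · exact isBigO_refl _ _
  · exact (isLittleO_zpow_of_lt hcd).isBigO

theorem hasDegree_zpow (c : ℤ) : HasDegree (fun T => T ^ c) c :=
  ⟨(eventually_gt_atTop 0).mono fun _ hT => zpow_pos hT c, isTheta_refl _ _⟩

namespace HasDegree

variable {g h : ℝ → ℝ} {c d : ℤ}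

theorem congr' (hg : HasDegree g c) (hgh : h =ᶠ[atTop] g) : HasDegree h c :=
  ⟨by filter_upwards [hg.1, hgh] with T hT hT' using hT' ▸ hT, hgh.trans_isTheta hg.2⟩

theorem mul (hg : HasDegree g c) (hh : HasDegree h d) :
    HasDegree (fun T => g T * h T) (c + d) := by
  refine ⟨by filter_upwards [hg.1, hh.1] with T hT hT' using mul_pos hT hT',
    (hg.2.mul hh.2).trans_eventuallyEq ?_⟩
  filter_upwards [eventually_ne_atTop 0] with T hT using (zpow_add₀ hT c d).symm

theorem inv (hg : HasDegree g c) : HasDegree (fun T => (g T)⁻¹) (-c) := by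
  refine ⟨hg.1.mono fun T hT => inv_pos.2 hT, ?_⟩
  simpa only [zpow_neg] using hg.2.inv

theorem add (hg : HasDegree g c) (hh : HasDegree h d) :
    HasDegree (fun T => g T + h T) (max c d) := by
  have left : g =O[atTop] fun T => g T + h T := IsBigO.of_bound' <| by
    filter_upwards [hg.1, hh.1] with T hT hT'
    rw [Real.norm_of_nonneg hT.le, Real.norm_of_nonneg (add_pos hT hT').le]
    linarith
  have right : h =O[atTop] fun T => g T + h T := IsBigO.of_bound' <| by
    filter_upwards [hg.1, hh.1] with T hT hT'
    rw [Real.norm_of_nonneg hT'.le, Real.norm_of_nonneg (add_pos hT hT').le]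
    linarith
  refine ⟨by filter_upwards [hg.1, hh.1] with T hT hT' using add_pos hT hT', ?_, ?_⟩
  · exact (hg.2.1.trans (isBigO_zpow_of_le (le_max_left c d))).add
      (hh.2.1.trans (isBigO_zpow_of_le (le_max_right c d)))
  · rcases max_choice c d with hcd | hcd <;> rw [hcd]
    · exact hg.2.2.trans left
    · exact hh.2.2.trans right

theorem le (hg : HasDegree g c) (hg' : HasDegree g d) : c ≤ d := by
  by_contra! hdc
  exact isLittleO_irrefl (hg.1.frequently.mono fun T hT => hT.ne')
    ((hg'.2.trans_isLittleO (isLittleO_zpow_of_lt hdc)).trans_isTheta hg.2.symm)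

theorem unique (hg : HasDegree g c) (hg' : HasDegree g d) : c = d :=
  (hg.le hg').antisymm (hg'.le hg)

end HasDegree

end Degree

/-- A reverse plane partition of shape `[a] × [b]` with entries at most `ℓ`, padded by `0` below
and to the left of the rectangle, where some coordinate is `0`, and by `ℓ` at the other points. -/
structure IsReversePlanePartition (a b ℓ : ℕ) (c : ℕ → ℕ → ℕ) : Prop where
  left : ∀ j, c 0 j = 0
  bottom : ∀ i, c i 0 = 0
  right : ∀ {i j}, a < i → 1 ≤ j → c i j = ℓ
  top : ∀ {i j}, 1 ≤ i → b < j → c i j = ℓ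
  le_succ_left : ∀ i j, c i j ≤ c (i + 1) j
  le_succ_right : ∀ i j, c i j ≤ c i (j + 1)

section Tropical

open Filter

variable {a b ℓ i j : ℕ} {c : ℕ → ℕ → ℕ} {x : ℝ → ℕ → ℕ → ℝ}

theorem IsReversePlanePartition.le (hc : IsReversePlanePartition a b ℓ c) (i j : ℕ) :
    c i j ≤ ℓ := by
  have h : c i j ≤ c (i + (a + 1)) j :=
    monotone_nat_of_le_succ (hc.le_succ_left · j) (by omega : i ≤ i + (a + 1))
  rcases j.eq_zero_or_pos with rfl | hj
  · rw [hc.bottom]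
    exact ℓ.zero_le
  · exact h.trans_eq (hc.right (by omega) hj)

/-- The labeling of `[a] × [b]` by powers of `T` whose tropicalization is `c`. -/
noncomputable def powLabeling (a b ℓ : ℕ) (c : ℕ → ℕ → ℕ) (T : ℝ) (i j : ℕ) : ℝ :=
  if InRect a b i j then T ^ c i j
  else if i = 0 ∧ j = 1 then 1 else if i = a + 1 ∧ j = b then T ^ ℓ else 0

theorem powLabeling_of_inRect (hij : InRect a b i j) (T : ℝ) :
    powLabeling a b ℓ c T i j = T ^ c i j := if_pos hij

theorem isLabeling_powLabeling {T : ℝ} (hT : 0 < T) :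
    IsLabeling a b (T ^ ℓ) (powLabeling a b ℓ c T) where
  pos hij := by
    rw [powLabeling_of_inRect hij]
    positivity
  top_pos := by positivity
  bot := by rw [powLabeling, if_neg (by unfold InRect; omega), if_pos ⟨rfl, rfl⟩]
  top := by
    rw [powLabeling, if_neg (by unfold InRect; omega), if_neg (by omega), if_pos ⟨rfl, rfl⟩]
  eq_zero hij hbot htop := by rw [powLabeling, if_neg hij, if_neg hbot, if_neg htop]

theorem hasDegree_lowerSum (hx : ∀ᶠ T in atTop, IsLabeling a b (T ^ ℓ) (x T))
    (hc : IsReversePlanePartition a b ℓ c) (hij : InRect a b i j)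
    (hleft : InRect a b (i - 1) j → HasDegree (fun T => x T (i - 1) j) (c (i - 1) j))
    (hdown : InRect a b i (j - 1) → HasDegree (fun T => x T i (j - 1)) (c i (j - 1))) :
    HasDegree (fun T => lowerSum (x T) i j) (max (c (i - 1) j) (c i (j - 1)) : ℕ) := by
  obtain ⟨⟨hi, hia⟩, hj, hjb⟩ := hij
  rcases hj.eq_or_lt with rfl | hj1
  · rw [hc.bottom, max_eq_left (Nat.zero_le _)]
    have hdeg : HasDegree (fun T => x T (i - 1) 1) (c (i - 1) 1) := by
      rcases hi.eq_or_lt with rfl | hi1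
      · rw [hc.left]
        exact (hasDegree_zpow 0).congr' (hx.mono fun T hT => by simpa using hT.bot)
      · exact hleft ⟨by omega, by omega⟩
    refine hdeg.congr' (hx.mono fun T hT => ?_)
    simp only [lowerSum]
    rw [hT.eq_zero (i := i) (j := 0) (by unfold InRect; omega) (by omega) (by omega),
      add_zero]
  rcases hi.eq_or_lt with rfl | hi1
  · rw [hc.left, max_eq_right (Nat.zero_le _)]
    refine (hdown ⟨by omega, by omega⟩).congr' (hx.mono fun T hT => ?_)
    simp only [lowerSum]
    rw [hT.eq_zero (i := 1 - 1) (j := j) (by unfold InRect; omega) (by omega) (by omega),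
      zero_add]
  · rw [Nat.cast_max]
    exact (hleft ⟨by omega, by omega⟩).add (hdown ⟨by omega, by omega⟩)

theorem hasDegree_upperInvSum (hx : ∀ᶠ T in atTop, IsLabeling a b (T ^ ℓ) (x T))
    (hc : IsReversePlanePartition a b ℓ c) (hij : InRect a b i j)
    (hright : InRect a b (i + 1) j → HasDegree (fun T => x T (i + 1) j) (c (i + 1) j))
    (hup : InRect a b i (j + 1) → HasDegree (fun T => x T i (j + 1)) (c i (j + 1))) :
    HasDegree (fun T => upperInvSum (x T) i j) (-(min (c (i + 1) j) (c i (j + 1)) : ℕ)) := by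
  obtain ⟨⟨hi, hia⟩, hj, hjb⟩ := hij
  rcases hjb.eq_or_lt with rfl | hjb
  · rw [hc.top hi j.lt_succ_self, min_eq_left (hc.le _ _)]
    have hdeg : HasDegree (fun T => x T (i + 1) j) (c (i + 1) j) := by
      rcases hia.eq_or_lt with rfl | hia
      · rw [hc.right i.lt_succ_self hj]
        exact (hasDegree_zpow ℓ).congr' (hx.mono fun T hT => by simpa using hT.top)
      · exact hright ⟨by omega, by omega⟩
    refine hdeg.inv.congr' (hx.mono fun T hT => ?_)
    simp only [upperInvSum]
    rw [hT.eq_zero (i := i) (j := j + 1) (by unfold InRect; omega) (by omega)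
      (by omega), inv_zero, add_zero]
  rcases hia.eq_or_lt with rfl | hia
  · rw [hc.right i.lt_succ_self hj, min_eq_right (hc.le _ _)]
    refine (hup ⟨by omega, by omega⟩).inv.congr' (hx.mono fun T hT => ?_)
    simp only [upperInvSum]
    rw [hT.eq_zero (i := i + 1) (j := j) (by unfold InRect; omega) (by omega)
      (by omega), inv_zero, zero_add]
  · rw [Nat.cast_min, ← max_neg_neg]
    exact (hright ⟨by omega, by omega⟩).inv.add (hup ⟨by omega, by omega⟩).inv

/-- An orbit of piecewise-linear promotion on reverse plane partitions: `c (t + 1)` is obtained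
from `c t` by toggling every element once, from bottom to top. -/
structure IsTropicalOrbit (a b ℓ : ℕ) (c : ℕ → ℕ → ℕ → ℕ) : Prop where
  isReversePlanePartition : ∀ t, IsReversePlanePartition a b ℓ (c t)
  recurrence : ∀ t {i j}, InRect a b i j → c (t + 1) i j + c t i j =
    max (c (t + 1) (i - 1) j) (c (t + 1) i (j - 1)) + min (c t (i + 1) j) (c t i (j + 1))

namespace IsTropicalOrbit

variable {c : ℕ → ℕ → ℕ → ℕ} {s t : ℕ}

theorem hasDegree_birationalPromotion_iterate (hc : IsTropicalOrbit a b ℓ c)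
    (hij : InRect a b i j) :
    HasDegree (fun T => (birationalPromotion a b)^[t] (powLabeling a b ℓ (c 0) T) i j)
      (c t i j) := by
  have orbit : ∀ᶠ T in atTop, ∀ t, IsLabeling a b (T ^ ℓ)
      ((birationalPromotion a b)^[t] (powLabeling a b ℓ (c 0) T)) := by
    filter_upwards [eventually_gt_atTop 0] with T hT
    exact (isLabeling_powLabeling hT).isPromotionOrbit_iterate.isLabeling
  induction t generalizing i j with
  | zero =>
    refine (hasDegree_zpow _).congr' (.of_forall fun T => ?_)
    simp [powLabeling_of_inRect hij]
  | succ t ih_time =>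
    induction hn : i + j using Nat.strong_induction_on generalizing i j with
    | _ n ih =>
    have lower := hasDegree_lowerSum (orbit.mono fun T hT => hT (t + 1))
      (hc.isReversePlanePartition (t + 1)) hij
      (fun h => ih _ (by unfold InRect at h; omega) h rfl)
      (fun h => ih _ (by unfold InRect at h; omega) h rfl)
    have upper := hasDegree_upperInvSum (orbit.mono fun T hT => hT t)
      (hc.isReversePlanePartition t) hij ih_time ih_time
    have degree : (c (t + 1) i j : ℤ) =
        (max (c (t + 1) (i - 1) j) (c (t + 1) i (j - 1)) : ℕ) +
          -(c t i j + -(min (c t (i + 1) j) (c t i (j + 1)) : ℕ)) := by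
      have := hc.recurrence t hij
      omega
    rw [degree]
    refine (lower.mul ((ih_time hij).mul upper).inv).congr' (.of_forall fun T => ?_)
    simp only [Function.iterate_succ_apply']
    rw [birationalPromotion_of_inRect hij, div_eq_mul_inv]

theorem add_antipode_eq (hc : IsTropicalOrbit a b ℓ c) {i' j' : ℕ} (hij : InRect a b i j)
    (hi : i + i' = a + 1) (hj : j + j' = b + 1) (hs : s + 1 = t + i + j) :
    c t i j + c s i' j' = ℓ := by
  have hij' : InRect a b i' j' := by unfold InRect at *; omega
  have hdeg := (hc.hasDegree_birationalPromotion_iterate (t := t) hij).mul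
    (hc.hasDegree_birationalPromotion_iterate (t := s) hij')
  suffices (c t i j + c s i' j' : ℤ) = ℓ by exact_mod_cast this
  refine hdeg.unique ((hasDegree_zpow ℓ).congr' ?_)
  filter_upwards [eventually_gt_atTop 0] with T hT
  rw [(isLabeling_powLabeling hT).isPromotionOrbit_iterate.mul_antipode_eq hij hi hj hs,
    zpow_natCast]

end IsTropicalOrbit

end Tropical

section StrictLabelings

variable {a b ℓ : ℕ} {f : (Fin a × Fin b) × Fin ℓ → ℤ}

theorem add_one_le_of_isPStrict {q : ℕ} (hf : IsPStrict (Fin a × Fin b) ℓ q f)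
    (x : Fin a) (y : Fin b) (z : Fin ℓ) : (x : ℤ) + y + 1 ≤ f ((x, y), z) := by
  induction hn : (x : ℕ) + y generalizing x y with
  | zero =>
    have := (hf.2.2 (x, y) z).1
    omega
  | succ n ih =>
    rcases Nat.eq_zero_or_pos x with hx | hx
    · have below := ih x ⟨y - 1, by omega⟩ (by simp only; omega)
      have step := hf.1 (x, ⟨y - 1, by omega⟩) (x, y) z
        (Prod.mk_lt_mk_iff_right.2 (by rw [Fin.lt_def]; simp only; omega))
      simp only at below
      omega
    · have below := ih ⟨x - 1, by omega⟩ y (by simp only; omega)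
      have step := hf.1 (⟨x - 1, by omega⟩, y) (x, y) z
        (Prod.mk_lt_mk_iff_left.2 (by rw [Fin.lt_def]; simp only; omega))
      simp only at below
      omega

theorem le_add_two_of_isPStrict (hf : IsPStrict (Fin a × Fin b) ℓ (a + b) f)
    (x : Fin a) (y : Fin b) (z : Fin ℓ) : f ((x, y), z) ≤ x + y + 2 := by
  induction hn : a + b - (x + y) generalizing x y with
  | zero => omega
  | succ n ih =>
    by_cases hy : (y : ℕ) + 1 < b
    · have above := ih x ⟨y + 1, hy⟩ (by simp only; omega)
      have step := hf.1 (x, y) (x, ⟨y + 1, hy⟩) z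
        (Prod.mk_lt_mk_iff_right.2 (Fin.lt_def.2 (Nat.lt_succ_self _)))
      push_cast at above
      omega
    · by_cases hx : (x : ℕ) + 1 < a
      · have above := ih ⟨x + 1, hx⟩ y (by simp only; omega)
        have step := hf.1 (x, y) (⟨x + 1, hx⟩, y) z
          (Prod.mk_lt_mk_iff_left.2 (Fin.lt_def.2 (Nat.lt_succ_self _)))
        push_cast at above
        omega
      · have := (hf.2.2 (x, y) z).2
        omega

/-- The labeling of `[a] × [b] × [ℓ]` encoded by a reverse plane partition `c`: of the two labels
possible at `(i, j, z)`, the larger one is used in the last `c i j` positions of the fiber over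
`(i, j)`. The coordinates of `Fin` start at `0`, those of `c` at `1`. -/
def labeling (a b ℓ : ℕ) (c : ℕ → ℕ → ℕ) : (Fin a × Fin b) × Fin ℓ → ℤ := fun p =>
  p.1.1 + p.1.2 + 1 + if (p.2 : ℕ) + c (p.1.1 + 1) (p.1.2 + 1) < ℓ then 0 else 1

variable {c : ℕ → ℕ → ℕ} {x : Fin a} {y : Fin b} {z : Fin ℓ}

theorem labeling_lt_iff :
    labeling a b ℓ c ((x, y), z) < x + y + 2 ↔ (z : ℕ) + c (x + 1) (y + 1) < ℓ := by
  simp only [labeling]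
  split_ifs <;> omega

theorem lt_labeling_iff :
    (x : ℤ) + y + 1 < labeling a b ℓ c ((x, y), z) ↔ ℓ ≤ z + c (x + 1) (y + 1) := by
  simp only [labeling]
  split_ifs <;> omega

theorem IsReversePlanePartition.mono (hc : IsReversePlanePartition a b ℓ c) {i i' j j' : ℕ}
    (hi : i ≤ i') (hj : j ≤ j') : c i j ≤ c i' j' :=
  (monotone_nat_of_le_succ (f := (c · j)) (hc.le_succ_left · j) hi).trans
    (monotone_nat_of_le_succ (hc.le_succ_right i') hj)

theorem IsReversePlanePartition.isPStrict_labeling (hc : IsReversePlanePartition a b ℓ c) :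
    IsPStrict (Fin a × Fin b) ℓ (a + b) (labeling a b ℓ c) := by
  refine ⟨fun ⟨x, y⟩ ⟨x', y'⟩ z hlt => ?_, fun ⟨x, y⟩ z z' hz => ?_, fun ⟨x, y⟩ z => ?_⟩
  · obtain ⟨hx, hy⟩ : (x : ℕ) ≤ x' ∧ (y : ℕ) ≤ y' := hlt.le
    have hne : ¬((x : ℕ) = x' ∧ (y : ℕ) = y') := fun h =>
      hlt.ne (Prod.ext (Fin.ext h.1) (Fin.ext h.2))
    have := hc.mono (Nat.succ_le_succ hx) (Nat.succ_le_succ hy)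
    simp only [labeling, Nat.succ_eq_add_one] at *
    split_ifs <;> omega
  · rw [Fin.le_def] at hz
    simp only [labeling]
    split_ifs <;> omega
  · simp only [labeling]
    split_ifs <;> omega

theorem mem_iff_le_add_card_of_isUpperSet {s : Finset (Fin ℓ)} (hs : IsUpperSet (s : Set (Fin ℓ)))
    (z : Fin ℓ) : z ∈ s ↔ ℓ ≤ z + s.card := by
  constructor <;> intro h
  · have := Finset.card_le_card fun w hw => hs (Finset.mem_Ici.1 hw) h
    rw [Fin.card_Ici] at this
    omega
  · by_contra hz
    have := Finset.card_le_card (s := s) (t := Finset.Ioi z) fun w hw =>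
      Finset.mem_Ioi.2 (lt_of_not_ge fun hwz => hz (hs hwz hw))
    rw [Fin.card_Ioi] at this
    omega

/-- The positions of the fiber over `(x, y)` carrying the larger of their two possible labels. -/
noncomputable def highPositions (f : (Fin a × Fin b) × Fin ℓ → ℤ) (x : Fin a) (y : Fin b) :
    Finset (Fin ℓ) :=
  Finset.univ.filter fun z => (x : ℤ) + y + 1 < f ((x, y), z)

theorem mem_highPositions : z ∈ highPositions f x y ↔ (x : ℤ) + y + 1 < f ((x, y), z) := by
  simp [highPositions]

theorem mem_highPositions_iff_le_add_card {q : ℕ} (hf : IsPStrict (Fin a × Fin b) ℓ q f) :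
    z ∈ highPositions f x y ↔ ℓ ≤ z + (highPositions f x y).card := by
  refine mem_iff_le_add_card_of_isUpperSet (fun z z' hz h => ?_) z
  rw [Finset.mem_coe, mem_highPositions] at *
  exact h.trans_le (hf.2.1 _ _ _ hz)

/-- The reverse plane partition encoding a labeling, extended beyond the rectangle by the boundary
values of `IsReversePlanePartition`. -/
noncomputable def highCount (f : (Fin a × Fin b) × Fin ℓ → ℤ) (i j : ℕ) : ℕ :=
  if h : InRect a b i j then
    (highPositions f ⟨i - 1, by unfold InRect at h; omega⟩
      ⟨j - 1, by unfold InRect at h; omega⟩).card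
  else if i = 0 ∨ j = 0 then 0 else ℓ

theorem highCount_succ_succ : highCount f (x + 1) (y + 1) = (highPositions f x y).card :=
  dif_pos (⟨⟨by omega, by omega⟩, by omega, by omega⟩ : InRect a b (x + 1) (y + 1))

theorem highCount_le (i j : ℕ) : highCount f i j ≤ ℓ := by
  unfold highCount
  split_ifs
  · exact (Finset.card_le_univ _).trans_eq (Fintype.card_fin ℓ)
  · exact ℓ.zero_le
  · exact le_rfl

theorem highCount_le_highCount {q : ℕ} (hf : IsPStrict (Fin a × Fin b) ℓ q f) {x' : Fin a}
    {y' : Fin b} (hlt : (x, y) < (x', y')) (hrank : (x' : ℕ) + y' = x + y + 1) :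
    highCount f (x + 1) (y + 1) ≤ highCount f (x' + 1) (y' + 1) := by
  rw [highCount_succ_succ, highCount_succ_succ]
  refine Finset.card_le_card fun z hz => ?_
  have := hf.1 _ _ z hlt
  rw [mem_highPositions] at *
  omega

theorem isReversePlanePartition_highCount {q : ℕ} (hf : IsPStrict (Fin a × Fin b) ℓ q f) :
    IsReversePlanePartition a b ℓ (highCount f) := by
  have zero {i j : ℕ} (h : i = 0 ∨ j = 0) : highCount f i j = 0 := by
    rw [highCount, dif_neg (by unfold InRect; omega), if_pos h]
  have full {i j : ℕ} (hi : 1 ≤ i) (hj : 1 ≤ j) (h : a < i ∨ b < j) : highCount f i j = ℓ := by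
    rw [highCount, dif_neg (by unfold InRect; omega), if_neg (by omega)]
  refine ⟨fun j => zero (.inl rfl), fun i => zero (.inr rfl),
    fun hi hj => full (by omega) hj (.inl hi), fun hi hj => full hi (by omega) (.inr hj),
    fun i j => ?_, fun i j => ?_⟩
  · by_cases hzero : i = 0 ∨ j = 0
    · simp only [zero hzero, zero_le]
    by_cases hfull : a < i + 1 ∨ b < j
    · exact (highCount_le i j).trans_eq (full (by omega) (by omega) hfull).symm
    obtain ⟨i, rfl⟩ := Nat.exists_eq_succ_of_ne_zero (not_or.1 hzero).1
    obtain ⟨j, rfl⟩ := Nat.exists_eq_succ_of_ne_zero (not_or.1 hzero).2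
    exact highCount_le_highCount hf (x := ⟨i, by omega⟩) (x' := ⟨i + 1, by omega⟩)
      (y := ⟨j, by omega⟩) (y' := ⟨j, by omega⟩)
      (Prod.mk_lt_mk_iff_left.2 (Fin.lt_def.2 (Nat.lt_succ_self i))) (by simp only; omega)
  · by_cases hzero : i = 0 ∨ j = 0
    · simp only [zero hzero, zero_le]
    by_cases hfull : a < i ∨ b < j + 1
    · exact (highCount_le i j).trans_eq (full (by omega) (by omega) hfull).symm
    obtain ⟨i, rfl⟩ := Nat.exists_eq_succ_of_ne_zero (not_or.1 hzero).1
    obtain ⟨j, rfl⟩ := Nat.exists_eq_succ_of_ne_zero (not_or.1 hzero).2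
    exact highCount_le_highCount hf (x := ⟨i, by omega⟩) (x' := ⟨i, by omega⟩)
      (y := ⟨j, by omega⟩) (y' := ⟨j + 1, by omega⟩)
      (Prod.mk_lt_mk_iff_right.2 (Fin.lt_def.2 (Nat.lt_succ_self j))) (by simp only; omega)

theorem labeling_highCount (hf : IsPStrict (Fin a × Fin b) ℓ (a + b) f) :
    labeling a b ℓ (highCount f) = f := by
  funext ⟨⟨x, y⟩, z⟩
  have lower := add_one_le_of_isPStrict hf x y z
  have upper := le_add_two_of_isPStrict hf x y z
  have high := mem_highPositions_iff_le_add_card (x := x) (y := y) (z := z) hf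
  rw [mem_highPositions, ← highCount_succ_succ] at high
  simp only [labeling]
  split_ifs <;> omega

end StrictLabelings

section Toggles

variable {a b ℓ : ℕ} {c c' : ℕ → ℕ → ℕ}

theorem IsReversePlanePartition.of_rank_change (hc : IsReversePlanePartition a b ℓ c) (k : ℕ)
    (eq_off : ∀ {i j}, ¬(InRect a b i j ∧ i + j = k) → c' i j = c i j)
    (bounds : ∀ {i j}, InRect a b i j → i + j = k → max (c (i - 1) j) (c i (j - 1)) ≤ c' i j ∧
      c' i j ≤ min (c (i + 1) j) (c i (j + 1))) :
    IsReversePlanePartition a b ℓ c' := by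
  refine ⟨fun j => ?_, fun i => ?_, fun hi hj => ?_, fun hi hj => ?_, fun i j => ?_, fun i j => ?_⟩
  · exact (eq_off (by unfold InRect; omega)).trans (hc.left j)
  · exact (eq_off (by unfold InRect; omega)).trans (hc.bottom i)
  · exact (eq_off (by unfold InRect; omega)).trans (hc.right hi hj)
  · exact (eq_off (by unfold InRect; omega)).trans (hc.top hi hj)
  · by_cases hlow : InRect a b i j ∧ i + j = k
    · rw [eq_off (i := i + 1) (by omega)]
      exact (bounds hlow.1 hlow.2).2.trans (min_le_left _ _)
    rw [eq_off hlow]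
    by_cases hhigh : InRect a b (i + 1) j ∧ i + 1 + j = k
    · exact (le_max_left _ _).trans (bounds hhigh.1 hhigh.2).1
    · exact (hc.le_succ_left i j).trans_eq (eq_off hhigh).symm
  · by_cases hlow : InRect a b i j ∧ i + j = k
    · rw [eq_off (j := j + 1) (by omega)]
      exact (bounds hlow.1 hlow.2).2.trans (min_le_right _ _)
    rw [eq_off hlow]
    by_cases hhigh : InRect a b i (j + 1) ∧ i + (j + 1) = k
    · exact (le_max_right _ _).trans (bounds hhigh.1 hhigh.2).1
    · exact (hc.le_succ_right i j).trans_eq (eq_off hhigh).symm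

theorem IsReversePlanePartition.max_le_and_le_min (hc : IsReversePlanePartition a b ℓ c)
    (i j : ℕ) : max (c (i - 1) j) (c i (j - 1)) ≤ c i j ∧
      c i j ≤ min (c (i + 1) j) (c i (j + 1)) :=
  ⟨max_le (hc.mono (i.sub_le 1) le_rfl) (hc.mono le_rfl (j.sub_le 1)),
    le_min (hc.le_succ_left i j) (hc.le_succ_right i j)⟩

/-- The array `c` with its `(i, j)` entry replaced by `v`. -/
def setEntry (c : ℕ → ℕ → ℕ) (i j v : ℕ) : ℕ → ℕ → ℕ :=
  Function.update c i (Function.update (c i) j v)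

theorem setEntry_self (c : ℕ → ℕ → ℕ) (i j v : ℕ) : setEntry c i j v i j = v := by
  simp [setEntry]

theorem setEntry_of_ne {i j i' j' : ℕ} (v : ℕ) (h : ¬(i' = i ∧ j' = j)) :
    setEntry c i j v i' j' = c i' j' := by
  simp only [setEntry, Function.update_apply]
  split_ifs <;> simp_all

theorem isReversePlanePartition_setEntry (hc : IsReversePlanePartition a b ℓ c) {i j v : ℕ}
    (hij : InRect a b i j) (hle : max (c (i - 1) j) (c i (j - 1)) ≤ v)
    (hge : v ≤ min (c (i + 1) j) (c i (j + 1))) :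
    IsReversePlanePartition a b ℓ (setEntry c i j v) := by
  refine hc.of_rank_change (i + j) (fun h => setEntry_of_ne v ?_) fun {i' j'} _ _ => ?_
  · rintro ⟨rfl, rfl⟩
    exact h ⟨hij, rfl⟩
  · by_cases h : i' = i ∧ j' = j
    · obtain ⟨rfl, rfl⟩ := h
      rw [setEntry_self]
      exact ⟨hle, hge⟩
    · rw [setEntry_of_ne v h]
      exact hc.max_le_and_le_min i' j'

theorem labeling_setEntry_of_ne {x : Fin a} {y : Fin b} {p : Fin a × Fin b} (h : p ≠ (x, y))
    (v : ℕ) (z : Fin ℓ) : labeling a b ℓ (setEntry c (x + 1) (y + 1) v) (p, z) =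
      labeling a b ℓ c (p, z) := by
  have hne : ¬((p.1 : ℕ) + 1 = x + 1 ∧ (p.2 : ℕ) + 1 = y + 1) := fun hp =>
    h (Prod.ext (Fin.ext (Nat.succ_injective hp.1)) (Fin.ext (Nat.succ_injective hp.2)))
  simp only [labeling, setEntry_of_ne v hne]

theorem inRect_succ_succ (x : Fin a) (y : Fin b) : InRect a b (x + 1) (y + 1) := by
  unfold InRect
  omega

theorem raisable_labeling (hc : IsReversePlanePartition a b ℓ c) {x : Fin a} {y : Fin b}
    {z : Fin ℓ} (hlow : (z : ℕ) + c (x + 1) (y + 1) < ℓ)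
    (hhigh : ℓ ≤ z + min (c (x + 2) (y + 1)) (c (x + 1) (y + 2))) :
    Raisable (Fin a × Fin b) ℓ (a + b) (labeling a b ℓ c) (x, y) z := by
  have hbounds := hc.max_le_and_le_min (x + 1) (y + 1)
  refine ⟨labeling a b ℓ (setEntry c (x + 1) (y + 1) _),
    (isReversePlanePartition_setEntry hc (inRect_succ_succ x y) (hbounds.1.trans hbounds.2)
      le_rfl).isPStrict_labeling,
    ?_, fun p w hp => labeling_setEntry_of_ne hp _ w⟩
  simp only [labeling, setEntry_self]
  rw [if_pos hlow, if_neg (not_lt.2 hhigh)]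
  omega

theorem raisable_labeling_iff (hc : IsReversePlanePartition a b ℓ c) (x : Fin a) (y : Fin b)
    (z : Fin ℓ) : Raisable (Fin a × Fin b) ℓ (a + b) (labeling a b ℓ c) (x, y) z ↔
      (z : ℕ) + c (x + 1) (y + 1) < ℓ ∧
        ℓ ≤ z + min (c (x + 2) (y + 1)) (c (x + 1) (y + 2)) := by
  constructor
  · rintro ⟨g, hg, hlt, eq_off⟩
    have upper := le_add_two_of_isPStrict hg x y z
    have lower := add_one_le_of_isPStrict hc.isPStrict_labeling x y z
    refine ⟨labeling_lt_iff.1 (hlt.trans_le upper), ?_⟩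
    rw [← Nat.add_min_add_left, le_min_iff]
    constructor
    · by_cases hx : (x : ℕ) + 1 < a
      · have covers : (x, y) < (⟨x + 1, hx⟩, y) :=
          Prod.mk_lt_mk_iff_left.2 (Fin.lt_def.2 (Nat.lt_succ_self _))
        have step := (hg.1 _ _ z covers).trans_eq (eq_off _ z covers.ne')
        exact lt_labeling_iff (x := ⟨x + 1, hx⟩).1 (by push_cast; omega)
      · rw [hc.right (by omega) (by omega)]
        exact le_add_self
    · by_cases hy : (y : ℕ) + 1 < b
      · have covers : (x, y) < (x, ⟨y + 1, hy⟩) :=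
          Prod.mk_lt_mk_iff_right.2 (Fin.lt_def.2 (Nat.lt_succ_self _))
        have step := (hg.1 _ _ z covers).trans_eq (eq_off _ z covers.ne')
        exact lt_labeling_iff (y := ⟨y + 1, hy⟩).1 (by push_cast; omega)
      · rw [hc.top (by omega) (by omega)]
        exact le_add_self
  · exact fun ⟨hlow, hhigh⟩ => raisable_labeling hc hlow hhigh

theorem lowerable_labeling (hc : IsReversePlanePartition a b ℓ c) {x : Fin a} {y : Fin b}
    {z : Fin ℓ} (hhigh : ℓ ≤ z + c (x + 1) (y + 1))
    (hlow : (z : ℕ) + max (c x (y + 1)) (c (x + 1) y) < ℓ) :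
    Lowerable (Fin a × Fin b) ℓ (a + b) (labeling a b ℓ c) (x, y) z := by
  have hbounds := hc.max_le_and_le_min (x + 1) (y + 1)
  refine ⟨labeling a b ℓ (setEntry c (x + 1) (y + 1) _),
    (isReversePlanePartition_setEntry hc (inRect_succ_succ x y) le_rfl
      (hbounds.1.trans hbounds.2)).isPStrict_labeling,
    ?_, fun p w hp => labeling_setEntry_of_ne hp _ w⟩
  simp only [labeling, setEntry_self]
  rw [if_neg (not_lt.2 hhigh), if_pos (by simpa using hlow)]
  omega

theorem lowerable_labeling_iff (hc : IsReversePlanePartition a b ℓ c) (x : Fin a) (y : Fin b)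
    (z : Fin ℓ) : Lowerable (Fin a × Fin b) ℓ (a + b) (labeling a b ℓ c) (x, y) z ↔
      ℓ ≤ z + c (x + 1) (y + 1) ∧ (z : ℕ) + max (c x (y + 1)) (c (x + 1) y) < ℓ := by
  constructor
  · rintro ⟨g, hg, hlt, eq_off⟩
    have lower := add_one_le_of_isPStrict hg x y z
    have upper := le_add_two_of_isPStrict hc.isPStrict_labeling x y z
    refine ⟨lt_labeling_iff.1 (lower.trans_lt hlt), ?_⟩
    rw [← Nat.add_max_add_left, max_lt_iff]
    constructor
    · rcases Nat.eq_zero_or_pos x with hx | hx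
      · rw [hx, hc.left]
        exact z.isLt
      · have covers : (⟨x - 1, by omega⟩, y) < (x, y) :=
          Prod.mk_lt_mk_iff_left.2 (Fin.lt_def.2 (Nat.sub_lt hx one_pos))
        have step := (eq_off _ z covers.ne).symm.trans_lt (hg.1 _ _ z covers)
        have := labeling_lt_iff.1 (step.trans_le (b := g ((x, y), z)) (by simp only; omega))
        rwa [Nat.sub_add_cancel hx] at this
    · rcases Nat.eq_zero_or_pos y with hy | hy
      · rw [hy, hc.bottom]
        exact z.isLt
      · have covers : (x, ⟨y - 1, by omega⟩) < (x, y) :=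
          Prod.mk_lt_mk_iff_right.2 (Fin.lt_def.2 (Nat.sub_lt hy one_pos))
        have step := (eq_off _ z covers.ne).symm.trans_lt (hg.1 _ _ z covers)
        have := labeling_lt_iff.1 (step.trans_le (b := g ((x, y), z)) (by simp only; omega))
        rwa [Nat.sub_add_cancel hy] at this
  · exact fun ⟨hhigh, hlow⟩ => lowerable_labeling hc hhigh hlow

end Toggles

section Promotion

variable {a b ℓ : ℕ} {c : ℕ → ℕ → ℕ}

/-- The piecewise-linear toggle of all entries `c i j` of the rectangle with `i + j = k + 1`, the
ones at which the two possible labels are `k` and `k + 1`. -/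
noncomputable def rankToggle (a b k : ℕ) (c : ℕ → ℕ → ℕ) (i j : ℕ) : ℕ :=
  if InRect a b i j ∧ i + j = k + 1 then
    max (c (i - 1) j) (c i (j - 1)) + min (c (i + 1) j) (c i (j + 1)) - c i j
  else c i j

theorem isReversePlanePartition_rankToggle (hc : IsReversePlanePartition a b ℓ c) (k : ℕ) :
    IsReversePlanePartition a b ℓ (rankToggle a b k c) := by
  refine hc.of_rank_change (k + 1) (fun h => if_neg h) fun {i j} hij hrank => ?_
  have := hc.max_le_and_le_min i j
  rw [rankToggle, if_pos ⟨hij, hrank⟩]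
  omega

theorem card_filter_fin_eq_sub {m n : ℕ} (hn : n ≤ ℓ) {p : Fin ℓ → Prop} [DecidablePred p]
    (hp : ∀ z : Fin ℓ, p z ↔ m ≤ (z : ℕ) ∧ (z : ℕ) < n) :
    (Finset.univ.filter p).card = n - m := by
  rw [← Nat.card_Ico, ← Finset.card_map Fin.valEmbedding]
  congr 1
  ext k
  simp only [Finset.mem_map, Finset.mem_filter, Finset.mem_univ, true_and, hp, Finset.mem_Ico,
    Fin.valEmbedding_apply]
  exact ⟨fun ⟨_, hz, hzk⟩ => hzk ▸ hz, fun hk => ⟨⟨k, by omega⟩, hk, rfl⟩⟩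

theorem labeling_eq_and_raisable_iff (hc : IsReversePlanePartition a b ℓ c) (k : ℕ) (x : Fin a)
    (y : Fin b) (z : Fin ℓ) : (labeling a b ℓ c ((x, y), z) = k ∧
      Raisable (Fin a × Fin b) ℓ (a + b) (labeling a b ℓ c) (x, y) z) ↔ (x : ℕ) + y + 1 = k ∧
        (z : ℕ) + c (x + 1) (y + 1) < ℓ ∧
          ℓ ≤ z + min (c (x + 2) (y + 1)) (c (x + 1) (y + 2)) := by
  rw [raisable_labeling_iff hc, ← and_assoc, ← and_assoc]
  refine and_congr_left fun _ => and_congr_left fun hlow => ?_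
  simp only [labeling]
  rw [if_pos hlow]
  omega

theorem labeling_eq_and_lowerable_iff (hc : IsReversePlanePartition a b ℓ c) (k : ℕ) (x : Fin a)
    (y : Fin b) (z : Fin ℓ) : (labeling a b ℓ c ((x, y), z) = k + 1 ∧
      Lowerable (Fin a × Fin b) ℓ (a + b) (labeling a b ℓ c) (x, y) z) ↔ (x : ℕ) + y + 1 = k ∧
        ℓ ≤ z + c (x + 1) (y + 1) ∧ (z : ℕ) + max (c x (y + 1)) (c (x + 1) y) < ℓ := by
  rw [lowerable_labeling_iff hc, ← and_assoc, ← and_assoc]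
  refine and_congr_left fun _ => and_congr_left fun hhigh => ?_
  simp only [labeling]
  rw [if_neg (not_lt.2 hhigh)]
  omega

theorem bkP_labeling (hc : IsReversePlanePartition a b ℓ c) (k : ℕ) :
    bkP (Fin a × Fin b) ℓ (a + b) k (labeling a b ℓ c) =
      labeling a b ℓ (rankToggle a b k c) := by
  funext ⟨⟨x, y⟩, z⟩
  simp only [bkP, labeling_eq_and_raisable_iff hc, labeling_eq_and_lowerable_iff hc]
  by_cases hk : (x : ℕ) + y + 1 = k
  · have toggled : rankToggle a b k c (x + 1) (y + 1) = max (c x (y + 1)) (c (x + 1) y) +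
        min (c (x + 2) (y + 1)) (c (x + 1) (y + 2)) - c (x + 1) (y + 1) :=
      if_pos ⟨inRect_succ_succ x y, by omega⟩
    obtain ⟨hlow, hhigh⟩ : max (c x (y + 1)) (c (x + 1) y) ≤ c (x + 1) (y + 1) ∧
        c (x + 1) (y + 1) ≤ min (c (x + 2) (y + 1)) (c (x + 1) (y + 2)) :=
      hc.max_le_and_le_min (x + 1) (y + 1)
    have hbound : min (c (x + 2) (y + 1)) (c (x + 1) (y + 2)) ≤ ℓ :=
      min_le_of_left_le (hc.le _ _)
    simp only [hk, true_and, labeling, toggled]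
    generalize max (c x (y + 1)) (c (x + 1) y) = low at *
    generalize min (c (x + 2) (y + 1)) (c (x + 1) (y + 2)) = high at *
    generalize c (x + 1) (y + 1) = mid at *
    -- The free positions of the fiber are those in `[ℓ - high, ℓ - low)`.
    by_cases hfree : ((z : ℕ) + mid < ℓ ∧ ℓ ≤ z + high) ∨ (ℓ ≤ z + mid ∧ (z : ℕ) + low < ℓ)
    · rw [if_pos hfree,
        card_filter_fin_eq_sub (m := ℓ - high) (n := z + 1) (by omega)
          (by intro w; rw [Fin.le_def]; omega),
        card_filter_fin_eq_sub (m := ℓ - mid) (n := ℓ - low) (by omega) (by omega)]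
      split_ifs <;> omega
    · rw [if_neg hfree]
      split_ifs <;> omega
  · have fixed : rankToggle a b k c (x + 1) (y + 1) = c (x + 1) (y + 1) :=
      if_neg fun h => hk (by omega)
    simp only [hk, false_and, or_self, if_false, labeling, fixed]

/-- The array obtained from `c` by the rank toggles `1, …, n`, in this order. -/
noncomputable def toggleSweep (a b : ℕ) (c : ℕ → ℕ → ℕ) : ℕ → ℕ → ℕ → ℕ
  | 0 => c
  | n + 1 => rankToggle a b (n + 1) (toggleSweep a b c n)

theorem isReversePlanePartition_toggleSweep (hc : IsReversePlanePartition a b ℓ c) (n : ℕ) :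
    IsReversePlanePartition a b ℓ (toggleSweep a b c n) := by
  induction n with
  | zero => exact hc
  | succ n ih => exact isReversePlanePartition_rankToggle ih (n + 1)

theorem toggleSweep_of_lt {n i j : ℕ} (h : n + 1 < i + j) : toggleSweep a b c n i j = c i j := by
  induction n with
  | zero => rfl
  | succ n ih => exact (if_neg (by omega)).trans (ih (by omega))

theorem toggleSweep_eq_of_le {m n i j : ℕ} (hmn : m ≤ n) (h : i + j ≤ m + 1) :
    toggleSweep a b c n i j = toggleSweep a b c m i j := by
  induction n, hmn using Nat.le_induction with
  | base => rfl
  | succ n hmn ih => exact (if_neg (by omega)).trans ih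

/-- Piecewise-linear promotion: the action of `proP` on reverse plane partitions. -/
noncomputable def promotion (a b : ℕ) (c : ℕ → ℕ → ℕ) : ℕ → ℕ → ℕ :=
  toggleSweep a b c (a + b - 1)

theorem promotion_add_eq (hc : IsReversePlanePartition a b ℓ c) {i j : ℕ}
    (hij : InRect a b i j) : promotion a b c i j + c i j =
      max (promotion a b c (i - 1) j) (promotion a b c i (j - 1)) +
        min (c (i + 1) j) (c i (j + 1)) := by
  obtain ⟨⟨hi, hia⟩, hj, hjb⟩ := id hij
  obtain ⟨n, hn⟩ := Nat.exists_eq_add_of_le' (show 2 ≤ i + j by omega)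
  have current : promotion a b c i j = toggleSweep a b c (n + 1) i j :=
    toggleSweep_eq_of_le (by omega) (by omega)
  have left : promotion a b c (i - 1) j = toggleSweep a b c n (i - 1) j :=
    toggleSweep_eq_of_le (by omega) (by omega)
  have below : promotion a b c i (j - 1) = toggleSweep a b c n i (j - 1) :=
    toggleSweep_eq_of_le (by omega) (by omega)
  have bounds := (isReversePlanePartition_toggleSweep hc n).max_le_and_le_min i j
  rw [current, left, below, toggleSweep, rankToggle, if_pos ⟨hij, by omega⟩]
  rw [toggleSweep_of_lt (i := i) (j := j) (by omega), toggleSweep_of_lt (i := i + 1) (by omega),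
    toggleSweep_of_lt (j := j + 1) (by omega)] at bounds ⊢
  omega

theorem isReversePlanePartition_promotion_iterate (hc : IsReversePlanePartition a b ℓ c)
    (t : ℕ) :
    IsReversePlanePartition a b ℓ ((promotion a b)^[t] c) :=
  Function.Iterate.rec (IsReversePlanePartition a b ℓ)
    hc (fun _ h => isReversePlanePartition_toggleSweep h _) t

theorem isTropicalOrbit_promotion_iterate (hc : IsReversePlanePartition a b ℓ c) :
    IsTropicalOrbit a b ℓ fun t => (promotion a b)^[t] c where
  isReversePlanePartition := isReversePlanePartition_promotion_iterate hc
  recurrence t _ _ hij := by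
    simp only [Function.iterate_succ_apply']
    exact promotion_add_eq (isReversePlanePartition_promotion_iterate hc t) hij

theorem proP_labeling (hc : IsReversePlanePartition a b ℓ c) :
    proP (Fin a × Fin b) ℓ (a + b) (labeling a b ℓ c) = labeling a b ℓ (promotion a b c) := by
  simp only [proP, promotion, bind_pure_comp, List.map_eq_map, List.foldl_map]
  induction a + b - 1 with
  | zero => rfl
  | succ n ih =>
    rw [List.range_succ, List.foldl_concat, ih]
    exact_mod_cast bkP_labeling (isReversePlanePartition_toggleSweep hc n) (n + 1)

theorem proP_iterate_labeling (hc : IsReversePlanePartition a b ℓ c) (t : ℕ) :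
    (proP (Fin a × Fin b) ℓ (a + b))^[t] (labeling a b ℓ c) =
      labeling a b ℓ ((promotion a b)^[t] c) := by
  induction t with
  | zero => rfl
  | succ t ih =>
    rw [Function.iterate_succ_apply', Function.iterate_succ_apply', ih,
      proP_labeling (isReversePlanePartition_promotion_iterate hc t)]

end Promotion

section Antipodes

variable {a b ℓ : ℕ} {f : (Fin a × Fin b) × Fin ℓ → ℤ}

theorem proP_iterate_antipode (hf : IsPStrict (Fin a × Fin b) ℓ (a + b) f) (x : Fin a)
    (y : Fin b) (z : Fin ℓ) (t : ℕ) :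
    (proP (Fin a × Fin b) ℓ (a + b))^[t + (x + y + 1)] f ((x.rev, y.rev), z.rev) =
      (a : ℤ) + b + 1 - (proP (Fin a × Fin b) ℓ (a + b))^[t] f ((x, y), z) := by
  have hc := isReversePlanePartition_highCount hf
  have reciprocity := (isTropicalOrbit_promotion_iterate hc).add_antipode_eq (t := t)
    (s := t + (x + y + 1)) (i' := x.rev + 1) (j' := y.rev + 1) (inRect_succ_succ x y)
    (by rw [Fin.val_rev]; omega) (by rw [Fin.val_rev]; omega) (by omega)
  rw [← labeling_highCount hf]
  simp only [proP_iterate_labeling hc, labeling, Fin.val_rev] at *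
  split_ifs <;> omega

theorem periodic_proP_iterate (hf : IsPStrict (Fin a × Fin b) ℓ (a + b) f) (x : Fin a)
    (y : Fin b) (z : Fin ℓ) :
    Function.Periodic (fun t => (proP (Fin a × Fin b) ℓ (a + b))^[t] f ((x, y), z)) (a + b) := by
  intro t
  have toAntipode := proP_iterate_antipode hf x y z t
  have fromAntipode := proP_iterate_antipode hf x.rev y.rev z.rev (t + (x + y + 1))
  have hperiod : t + (x + y + 1) + (x.rev + y.rev + 1) = t + (a + b) := by
    simp only [Fin.val_rev]
    omega
  rw [hperiod] at fromAntipode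
  simp only [Fin.rev_rev] at fromAntipode
  simp only [fromAntipode, toAntipode, sub_sub_cancel]

theorem map_range_add_of_periodic {α : Type*} {u : ℕ → α} {n : ℕ} (hu : Function.Periodic u n)
    (r : ℕ) : (Multiset.range n).map (fun t => u (t + r)) = (Multiset.range n).map u := by
  have shift : (Multiset.range n).map (· + r) = Multiset.Ico r (r + n) := by
    rw [← Finset.range_val, Finset.range_eq_Ico, add_comm r n]
    exact (Multiset.map_add_right_Ico 0 n r).trans (by rw [zero_add])
  calc (Multiset.range n).map (fun t => u (t + r))
      = (Multiset.Ico r (r + n)).map u := by rw [← shift, Multiset.map_map, Function.comp_def]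
    _ = ((Multiset.Ico r (r + n)).map (· % n)).map u := by
      rw [Multiset.map_map]
      exact Multiset.map_congr rfl fun t _ => (hu.map_mod_nat t).symm
    _ = (Multiset.range n).map u := by rw [Nat.multiset_Ico_map_mod]

end Antipodes

end RectanglePromotion

/-- for antipodal elements `(x₁,y₁,z₁)` and
`(x₂,y₂,z₂) = (a+1−x₁, b+1−y₁, ℓ+1−z₁)` of `[a]×[b]×[ℓ]` and
`f ∈ L_{([a]×[b])×[ℓ]}(R^{a+b})`,
`Dist(f,(x₂,y₂,z₂)) = {a+b+1−m : m ∈ Dist(f,(x₁,y₁,z₁))}`. -/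
theorem pstrict_dist_antipodal (a b ℓ : ℕ)
    (f : (Fin a × Fin b) × Fin ℓ → ℤ)
    (hf : IsPStrict (Fin a × Fin b) ℓ (a + b) f)
    (x : Fin a) (y : Fin b) (z : Fin ℓ) :
    DistP a b ℓ f ((x.rev, y.rev), z.rev) =
      (DistP a b ℓ f ((x, y), z)).map (fun m => (a : ℤ) + b + 1 - m) := by
  have periodic := RectanglePromotion.periodic_proP_iterate hf x.rev y.rev z.rev
  calc DistP a b ℓ f ((x.rev, y.rev), z.rev)
      = (Multiset.range (a + b)).map fun t =>
          (proP (Fin a × Fin b) ℓ (a + b))^[t + (x + y + 1)] f ((x.rev, y.rev), z.rev) :=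
        (RectanglePromotion.map_range_add_of_periodic periodic (x + y + 1)).symm
    _ = (Multiset.range (a + b)).map fun t =>
          (a : ℤ) + b + 1 - (proP (Fin a × Fin b) ℓ (a + b))^[t] f ((x, y), z) :=
        Multiset.map_congr rfl fun t _ => RectanglePromotion.proP_iterate_antipode hf x y z t
    _ = (DistP a b ℓ f ((x, y), z)).map (fun m => (a : ℤ) + b + 1 - m) := by
        rw [DistP, Multiset.map_map, Function.comp_def]
end
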